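/- Let n ≥ 2 and let Γ ⊆ ℝⁿ be a convex invariant cone, and let f be a concave elliptic Hessian operator on Γ satisfying condition N with constants N₁, N₂ > 0. Let Ω ⊂ ℝⁿ be a bounded domain and let u be a smooth admissible function on Ω, continuous up to the boundary, solving F(D²u) = 1 in Ω with u = 0 on ∂Ω. Assume the interior gradient bound sup_Ω ( (−u)^α |Du| ) ≤ K holds for some constants α > 0 and K > 0. Then there exist constants β > 0 and C > 0, depending only on ‖u‖_{C⁰(Ω)}, K, α, N₁, N₂ and diam(Ω), such that sup_Ω ( (−u)^β |D²u| ) ≤ C. (In particular, no condition D on u is needed for this Hessian estimate.) -/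

import Mathlib

open scoped BigOperators

noncomputable section

/-- The positive orthant `Γₙ = (0,∞)ⁿ` in `ℝⁿ`. -/
def PosOrthant (n : ℕ) : Set (Fin n → ℝ) := {lam | ∀ i, 0 < lam i}

/-- A convex invariant cone: an open cone `Γ ⊆ ℝⁿ` with vertex at the origin, `Γ ≠ ℝⁿ`,
which is convex, satisfies `Γ + Γₙ ⊆ Γ`, and is invariant under permutations of coordinates. -/
def IsConvexInvariantCone {n : ℕ} (Γ : Set (Fin n → ℝ)) : Prop :=
  IsOpen Γ ∧ Γ ≠ Set.univ ∧ Convex ℝ Γ ∧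
    (∀ lam ∈ Γ, ∀ t : ℝ, 0 < t → t • lam ∈ Γ) ∧
    (∀ lam ∈ Γ, ∀ tau ∈ PosOrthant n, lam + tau ∈ Γ) ∧
    (∀ lam ∈ Γ, ∀ σ : Equiv.Perm (Fin n), lam ∘ σ ∈ Γ)

/-- The partial derivative `∂f/∂λᵢ(λ)`. -/
def fpd {n : ℕ} (f : (Fin n → ℝ) → ℝ) (i : Fin n) (lam : Fin n → ℝ) : ℝ :=
  fderiv ℝ f lam (Pi.single i 1)

/-- A concave elliptic Hessian operator on a convex invariant cone `Γ`:
a `C²`, permutation-invariant, concave function `f` on `Γ` which is elliptic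
(`∂f/∂λᵢ > 0`), positive, and positively homogeneous of degree one. -/
def IsConcaveEllipticHessianOp {n : ℕ} (Γ : Set (Fin n → ℝ)) (f : (Fin n → ℝ) → ℝ) : Prop :=
  ContDiffOn ℝ 2 f Γ ∧ ConcaveOn ℝ Γ f ∧
    (∀ lam ∈ Γ, ∀ σ : Equiv.Perm (Fin n), f (lam ∘ σ) = f lam) ∧
    (∀ lam ∈ Γ, ∀ i, 0 < fpd f i lam) ∧
    (∀ lam ∈ Γ, 0 < f lam) ∧
    (∀ lam ∈ Γ, ∀ t : ℝ, 0 < t → f (t • lam) = t * f lam)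

/-- Condition N: whenever `λ ∈ Γ` satisfies `f(λ) = 1` and `Σᵢ ∂f/∂λᵢ(λ) ≤ C` for some `C > 0`,
then `∂f/∂λᵢ(λ) ≥ 1/(N₁ C^{N₂})` for every `i`. -/
def ConditionN {n : ℕ} (Γ : Set (Fin n → ℝ)) (f : (Fin n → ℝ) → ℝ) (N₁ N₂ : ℝ) : Prop :=
  ∀ lam ∈ Γ, f lam = 1 → ∀ C : ℝ, 0 < C → (∑ i, fpd f i lam) ≤ C →
    ∀ i, 1 / (N₁ * C ^ N₂) ≤ fpd f i lam

/-- The Hessian matrix `D²u(x)`. -/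
def hessianMatrix {n : ℕ} (u : EuclideanSpace ℝ (Fin n) → ℝ) (x : EuclideanSpace ℝ (Fin n)) :
    Matrix (Fin n) (Fin n) ℝ :=
  fun i j => iteratedFDeriv ℝ 2 u x ![EuclideanSpace.single i 1, EuclideanSpace.single j 1]

/-- The vector of eigenvalues `λ(D²u(x))` of the Hessian of `u` at `x`
(junk value `0` if the Hessian matrix fails to be symmetric). -/
def hessEigen {n : ℕ} (u : EuclideanSpace ℝ (Fin n) → ℝ) (x : EuclideanSpace ℝ (Fin n)) :
    Fin n → ℝ :=
  if h : (hessianMatrix u x).IsHermitian then h.eigenvalues else 0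

/-- Condition D for a solution `u` of `F(D²u) = 1` on a set `Ω`: at every point, if an
eigenvalue `λᵢ` of `D²u` exceeds `D₁` then `∂f/∂λᵢ(λ) ⬝ λᵢ ≤ D₂`. -/
def ConditionD {n : ℕ} (f : (Fin n → ℝ) → ℝ) (u : EuclideanSpace ℝ (Fin n) → ℝ)
    (Ω : Set (EuclideanSpace ℝ (Fin n))) (D₁ D₂ : ℝ) : Prop :=
  ∀ x ∈ Ω, ∀ i, D₁ < hessEigen u x i →
    fpd f i (hessEigen u x) * hessEigen u x i ≤ D₂

/-- The `k`-th elementary symmetric polynomial `σ_k` on `ℝⁿ`. -/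
def esymmF (n k : ℕ) (lam : Fin n → ℝ) : ℝ :=
  ∑ s ∈ (Finset.univ : Finset (Fin n)).powersetCard k, ∏ i ∈ s, lam i

/-- The Gårding cone `Γ_k = {λ : σ_j(λ) > 0, j = 1,…,k}`. -/
def GammaK (n k : ℕ) : Set (Fin n → ℝ) :=
  {lam | ∀ j : ℕ, 1 ≤ j → j ≤ k → 0 < esymmF n j lam}

/-- The cone `Γ̂_p` of vectors all of whose sums of `p` distinct coordinates are positive. -/
def GammaHat (n p : ℕ) : Set (Fin n → ℝ) :=
  {lam | ∀ s : Finset (Fin n), s.card = p → 0 < ∑ i ∈ s, lam i}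

/-- The `p`-Monge–Ampère operator `M_p(λ) = ∏_{i₁<⋯<i_p} (λ_{i₁} + ⋯ + λ_{i_p})`. -/
def pMA (n p : ℕ) (lam : Fin n → ℝ) : ℝ :=
  ∏ s ∈ (Finset.univ : Finset (Fin n)).powersetCard p, ∑ i ∈ s, lam i

/-- Quadratic growth: `u(x) ≥ C⁻¹|x|² − C` for some `C > 0`. -/
def QuadraticGrowth {n : ℕ} (u : EuclideanSpace ℝ (Fin n) → ℝ) : Prop :=
  ∃ C : ℝ, 0 < C ∧ ∀ x, C⁻¹ * ‖x‖ ^ 2 - C ≤ u x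

/-- `u` is a quadratic polynomial: `u(x) = ½ xᵀAx + b·x + c` with `A` symmetric. -/
def IsQuadraticPolynomial {n : ℕ} (u : EuclideanSpace ℝ (Fin n) → ℝ) : Prop :=
  ∃ (A : Matrix (Fin n) (Fin n) ℝ) (b : Fin n → ℝ) (c : ℝ), A.IsSymm ∧
    ∀ x, u x = (1 / 2) * (∑ i, ∑ j, A i j * x i * x j) + (∑ i, b i * x i) + c

theorem isLocalMax_second {ψ ψ' : ℝ → ℝ} {c : ℝ}
    (h1 : ∀ᶠ t in nhds (0:ℝ), HasDerivAt ψ (ψ' t) t) (h2 : HasDerivAt ψ' c 0)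
    (hm : IsLocalMax ψ 0) : ψ' 0 = 0 ∧ c ≤ 0 := by
  have h0 : ψ' 0 = 0 := hm.hasDerivAt_eq_zero h1.self_of_nhds
  refine ⟨h0, ?_⟩
  by_contra hc
  push Not at hc
  have hd : deriv ψ =ᶠ[nhds 0] ψ' := h1.mono fun t ht => ht.deriv
  have hdd : deriv (deriv ψ) 0 = c := by rw [hd.deriv_eq]; exact h2.deriv
  have hmin : IsLocalMin ψ 0 :=
    isLocalMin_of_deriv_deriv_pos (by rw [hdd]; exact hc) (by rw [hd.self_of_nhds, h0])
      h1.self_of_nhds.continuousAt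
  have hconst : ψ =ᶠ[nhds 0] fun _ => ψ 0 := by
    filter_upwards [hm, hmin] with t a b using le_antisymm a b
  have : deriv ψ =ᶠ[nhds 0] fun _ => 0 := by
    have := hconst.deriv
    simpa using this
  have h3 : deriv (deriv ψ) 0 = 0 := by rw [this.deriv_eq]; simp
  linarith

theorem aux_sq3 (x y z : ℝ) : (x - y + z)^2 ≤ 3*(x^2+y^2+z^2) := by
  nlinarith [sq_nonneg (x+y), sq_nonneg (x-z), sq_nonneg (y+z)]

theorem aux_sq2 (x y : ℝ) : (x + y)^2 ≤ 2*x^2+2*y^2 := by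
  nlinarith [sq_nonneg (x-y)]

theorem aux_sq2' (x y : ℝ) : (x - y)^2 ≤ 2*x^2+2*y^2 := by
  nlinarith [sq_nonneg (x+y)]

theorem aux_amgm (A b c m l : ℝ) : 4*m*(A*A*b)*c*l ≤ (A*b)^2*l^2 + 4*m^2*(A^2*c^2) := by
  nlinarith [sq_nonneg ((A*b)*l - 2*m*(A*c))]

theorem aux_beta (β r h E C3 : ℝ) (h6 : 6 ≤ β) (hC : 2*C3 ≤ β) (hE : 0 ≤ E)
    (hh : h^2 ≤ E/8 + C3) : (r+h)^2/β ≤ r^2/3 + (E/24+1) := by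
  rw [div_le_iff₀ (by linarith)]
  have := aux_sq2 r h
  nlinarith [mul_le_mul_of_nonneg_right h6 (sq_nonneg r), mul_le_mul_of_nonneg_right h6 hE]

set_option maxHeartbeats 1000000 in
theorem core_one (w M K ε B β C3 C4 K1 d g l r xi p h : ℝ) (a m : ℕ) (hm : m = 4*a+2)
    (hw : 0 < w) (hwM : w ≤ M) (hM : 1 ≤ M) (hK : 0 < K)
    (hK1 : K1 = M^(2*a+2)*K^2) (hε : ε = 1/(96*K1)) (hB : B = 4*ε*m^2*K^4+2)
    (hC3 : C3 = 3*ε^2*m^2*(K^6*M^(2*a+2)) + 3*B^2*d^2)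
    (hβ6 : 6 ≤ β) (hβC : 2*C3 ≤ β) (hC4 : C4 = 3*β^2*K^2 + 2*C3*M^(2*a+2))
    (hp : w^(2*a)*p ≤ K^2) (hgp : g^2 ≤ p) (hx : xi^2 ≤ d^2)
    (hh : h = ε*(2*g*l*w^m - m*w^(m-1)*g*p) + B*xi)
    (hr : r = β*g/w - h) :
    (ε/2)*w^m*l^2 + 1 ≤ (4/3)*r^2 - r^2 - β*g^2/w^2
      + ε*(2*w^m*l^2 - 4*m*w^(m-1)*g^2*l) + B ∧
    (ε/2)*w^m*l^2 + 1 - C4/w^(2*a+2) ≤ - r^2 - β*g^2/w^2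
      + ε*(2*w^m*l^2 - 4*m*w^(m-1)*g^2*l) + B := by
  have hp0 : 0 ≤ p := le_trans (sq_nonneg g) hgp
  have hK1p : 0 < K1 := by rw [hK1]; positivity
  have hεp : 0 < ε := by rw [hε]; positivity
  have hwa : 0 < w^(2*a) := by positivity
  have hwM2 : w^(2*a+2) ≤ M^(2*a+2) := pow_le_pow_left₀ hw.le hwM _
  have hP0 : 0 ≤ w^(2*a)*p := by positivity
  -- basic bounds
  have e1 : w^m = w^(2*a+2) * w^(2*a) := by rw [hm, ← pow_add]; congr 1; omega
  have e2 : w^(m-1) = w^(2*a)*w^(2*a)*w := by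
    rw [hm, ← pow_add, ← pow_succ]; congr 1; omega
  have hP1 : w^m*p ≤ K1 := by
    rw [e1, hK1, mul_assoc]; gcongr
  have hg2 : (w^(2*a)*g^2) ≤ w^(2*a)*p := by gcongr
  have hG0 : 0 ≤ w^(2*a)*g^2 := by positivity
  have hP2 : (w^(2*a))^2*g^4 ≤ K^4 := by
    have : (w^(2*a)*g^2)^2 ≤ (K^2)^2 := by gcongr; linarith
    calc (w^(2*a))^2*g^4 = (w^(2*a)*g^2)^2 := by rw [mul_pow, ← pow_mul g]
      _ ≤ (K^2)^2 := this
      _ = K^4 := by rw [← pow_mul]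
  have hcross : 4*m*w^(m-1)*g^2*l ≤ w^m*l^2 + 4*m^2*K^4 := by
    have h1 : w^m = (w^(2*a)*w)^2 := by rw [← pow_succ, ← pow_mul, hm]; congr 1; omega
    have h2 : 4*m*w^(m-1)*g^2*l ≤ w^m*l^2 + 4*m^2*((w^(2*a))^2*g^4) := by
      rw [h1, e2]
      have := aux_amgm (w^(2*a)) w (g^2) m l
      rwa [← pow_mul g] at this
    have : 4*(m:ℝ)^2*((w^(2*a))^2*g^4) ≤ 4*m^2*K^4 := by gcongr
    linarith
  have hh2 : h^2 ≤ (ε/8)*w^m*l^2 + C3 := by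
    have hA : (ε*(2*g*l*w^m))^2 ≤ ε/24 * (w^m*l^2) := by
      have h4 : w^m*g^2 ≤ K1 := le_trans (by gcongr) hP1
      have h5 : (ε*(2*g*l*w^m))^2 = 4*ε^2*(w^m*g^2)*(w^m*l^2) := by ring
      rw [h5]
      have h6 : 4*ε^2*(w^m*g^2) ≤ ε/24 := by
        have : 4*ε^2*(w^m*g^2) ≤ 4*ε^2*K1 := by gcongr
        have h7 : ε*K1 = 1/96 := by rw [hε]; field_simp
        calc 4*ε^2*(w^m*g^2) ≤ 4*ε^2*K1 := this
          _ = 4*ε*(ε*K1) := by ring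
          _ = ε/24 := by rw [h7]; ring
      have : 0 ≤ w^m*l^2 := by positivity
      gcongr
    have hBd : (ε*(m*w^(m-1)*g*p))^2 ≤ ε^2*m^2*(K^6*M^(2*a+2)) := by
      have h5 : (ε*(m*w^(m-1)*g*p))^2
          = ε^2*m^2*((w^(2*a)*g^2)*(w^(2*a)*p)^2*w^(2*a+2)) := by
        rw [e2]; ring
      rw [h5]
      have : (w^(2*a)*g^2)*(w^(2*a)*p)^2*w^(2*a+2) ≤ K^2*(K^2)^2*M^(2*a+2) := by
        gcongr; linarith
      have h8 : K^2*(K^2)^2*M^(2*a+2) = K^6*M^(2*a+2) := by ring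
      rw [h8] at this
      gcongr
    have hCx : (B*xi)^2 ≤ B^2*d^2 := by rw [mul_pow]; gcongr
    have := aux_sq3 (ε*(2*g*l*w^m)) (ε*(m*w^(m-1)*g*p)) (B*xi)
    have e : h = ε*(2*g*l*w^m) - ε*(m*w^(m-1)*g*p) + B*xi := by rw [hh]; ring
    rw [e, hC3]
    linarith
  have hml : 0 ≤ w^m*l^2 := by positivity
  have hεml : 0 ≤ ε*(w^m*l^2) := by positivity
  have hC30 : 0 ≤ C3 := by rw [hC3]; positivity
  have hmain : ε*(w^m*l^2) - 4*ε*m^2*K^4 ≤ ε*(2*w^m*l^2 - 4*m*w^(m-1)*g^2*l) := by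
    have : ε*(w^m*l^2 - 4*m^2*K^4) ≤ ε*(2*w^m*l^2 - 4*m*w^(m-1)*g^2*l) := by
      apply mul_le_mul_of_nonneg_left _ hεp.le; linarith
    linarith
  constructor
  · have e : β*g^2/w^2 = (r+h)^2/β := by
      have : r + h = β*g/w := by rw [hr]; ring
      rw [this]; field_simp
    have h9 : (r+h)^2/β ≤ r^2/3 + ((ε/24)*w^m*l^2 + 1) := by
      have := aux_beta β r h (ε*(w^m*l^2)) C3 hβ6 hβC hεml (by linarith)
      linarith
    rw [e, hB]
    linarith
  · have h10 : r^2 ≤ 2*(β*g/w)^2 + 2*h^2 := by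
      rw [hr]; exact aux_sq2' _ _
    have h11 : β*g^2/w^2 ≤ (β*g/w)^2 := by
      rw [div_pow, mul_pow]; gcongr; nlinarith
    have h12 : 3*(β*g/w)^2 + 2*C3 ≤ C4/w^(2*a+2) := by
      rw [le_div_iff₀ (by positivity), hC4]
      have h13 : (β*g/w)^2 * w^(2*a+2) = β^2*(w^(2*a)*g^2) := by
        rw [div_pow, pow_add]; field_simp
      have h14 : β^2*(w^(2*a)*g^2) ≤ β^2*K^2 := by gcongr; linarith
      have h15 : 2*C3*w^(2*a+2) ≤ 2*C3*M^(2*a+2) := by gcongr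
      calc (3*(β*g/w)^2 + 2*C3)*w^(2*a+2) = 3*((β*g/w)^2*w^(2*a+2)) + 2*C3*w^(2*a+2) := by ring
        _ ≤ _ := by rw [h13]; linarith
    rw [hB]
    linarith

set_option maxHeartbeats 1000000 in
theorem core_sum {n : ℕ} (i1 : Fin n) (fi l g r x : Fin n → ℝ) (T N1 D : ℝ) (k : ℕ)
    (w M K ε B β C3 C4 K1 d p : ℝ) (a m : ℕ) (hm : m = 4*a+2)
    (hw : 0 < w) (hwM : w ≤ M) (hM : 1 ≤ M) (hK : 0 < K)
    (hK1 : K1 = M^(2*a+2)*K^2) (hε : ε = 1/(96*K1)) (hB : B = 4*ε*m^2*K^4+2)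
    (hC3 : C3 = 3*ε^2*m^2*(K^6*M^(2*a+2)) + 3*B^2*d^2)
    (hβ6 : 6 ≤ β) (hβC : 2*C3 ≤ β) (hC4 : C4 = 3*β^2*K^2 + 2*C3*M^(2*a+2))
    (hD : D = (β + ε*m*K1)*M) (hN1 : 0 < N1)
    (hp : w^(2*a)*p ≤ K^2) (hgp : ∀ i, (g i)^2 ≤ p) (hx : ∀ i, (x i)^2 ≤ d^2)
    (hr : ∀ i, r i = β*g i/w - (ε*(2*g i*l i*w^m - m*w^(m-1)*g i*p) + B*x i))
    (hf : ∀ i, 0 < fi i) (hl1 : 0 < l i1)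
    (hthird : ∑ i, (if 6*fi i1 < fi i ∧ -(l i1)/4 ≤ l i then (4/3)*(fi i*(r i)^2) else 0) ≤ T)
    (hsecond : T + ∑ i, fi i*(- (r i)^2 - β*(g i)^2/w^2
      + ε*(2*w^m*(l i)^2 - 4*m*w^(m-1)*(g i)^2*l i) + B) - β/w - ε*m*(w^(m-1)*p) ≤ 0)
    (hN : ∀ C : ℝ, 1 ≤ C → ∑ i, fi i ≤ C → 1/(N1*C^k) ≤ fi i1) :
    w^(m+(2*a+2))*(l i1)^2 ≤ (64+48*n)*C4/ε ∨ w^(m+k+1)*(l i1)^2 ≤ 8*N1*D^(k+1)/ε := by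
  by_contra hcon
  push Not at hcon
  obtain ⟨hA, hBB⟩ := hcon
  have hp0 : 0 ≤ p := le_trans (sq_nonneg _) (hgp i1)
  have hK1p : 0 < K1 := by rw [hK1]; positivity
  have hεp : 0 < ε := by rw [hε]; positivity
  have hC30 : 0 ≤ C3 := by rw [hC3]; positivity
  have hC40 : 0 ≤ C4 := by rw [hC4]; positivity
  have hP1 : w^m*p ≤ K1 := by
    have e1 : w^m = w^(2*a+2) * w^(2*a) := by rw [hm, ← pow_add]; congr 1; omega
    have hwM2 : w^(2*a+2) ≤ M^(2*a+2) := pow_le_pow_left₀ hw.le hwM _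
    rw [e1, hK1, mul_assoc]; gcongr
  have hP1' : w^(m-1)*p ≤ K1/w := by
    rw [le_div_iff₀ hw]
    have : w^m = w^(m-1)*w := by rw [← pow_succ]; congr 1; omega
    rw [this] at hP1; linarith
  have hmul := fun i => core_one w M K ε B β C3 C4 K1 d (g i) (l i) (r i) (x i) p _ a m hm hw hwM
    hM hK hK1 hε hB hC3 hβ6 hβC hC4 hp (hgp i) (hx i) rfl (hr i)
  set c := C4/w^(2*a+2) with hc
  have hc0 : 0 ≤ c := by positivity
  have hA' : (64+48*n)*c < ε*(w^m*(l i1)^2) := by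
    rw [div_lt_iff₀ hεp, pow_add] at hA
    rw [hc, ← mul_div_assoc, div_lt_iff₀ (by positivity)]
    linarith
  have hn0 : (0:ℝ) ≤ n := Nat.cast_nonneg n
  have hnc : 0 ≤ (n:ℝ)*c := by positivity
  have key : ∀ i, fi i*((ε/2)*w^m*(l i)^2 + 1) - 6*c*fi i1 ≤
      (if 6*fi i1 < fi i ∧ -(l i1)/4 ≤ l i then (4/3)*(fi i*(r i)^2) else 0)
      + fi i*(- (r i)^2 - β*(g i)^2/w^2
      + ε*(2*w^m*(l i)^2 - 4*m*w^(m-1)*(g i)^2*l i) + B)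
      + (ε/4)*(w^m*(fi i*(l i)^2)) := by
    intro i
    have hfi := hf i
    have hf1 := hf i1
    have hcf : 0 ≤ c*fi i1 := by positivity
    have hE : 0 ≤ (ε/4)*(w^m*(fi i*(l i)^2)) := by positivity
    split_ifs with hJ
    · have := mul_le_mul_of_nonneg_left (hmul i).1 hfi.le
      linarith
    · have h2 := mul_le_mul_of_nonneg_left (hmul i).2 hfi.le
      have h3 : c*fi i ≤ 6*c*fi i1 + (ε/4)*(w^m*(fi i*(l i)^2)) := by
        by_cases h6 : 6*fi i1 < fi i
        · have h7 : l i < -(l i1)/4 := by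
            by_contra h8; push Not at h8; exact hJ ⟨h6, h8⟩
          have h8 : (l i1)^2/16 ≤ (l i)^2 := by nlinarith
          have h9 : c ≤ (ε/4)*(w^m*(l i)^2) := by
            have : ε*(w^m*((l i1)^2/16)) ≤ ε*(w^m*(l i)^2) := by gcongr
            linarith
          have := mul_le_mul_of_nonneg_right h9 hfi.le
          linarith
        · push Not at h6
          have := mul_le_mul_of_nonneg_left h6 hc0
          linarith
      linarith
  have hS := Finset.sum_le_sum (fun i (_ : i ∈ Finset.univ) => key i)
  simp only [Finset.sum_add_distrib, Finset.sum_sub_distrib, Finset.sum_const, Finset.card_univ,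
    Fintype.card_fin, nsmul_eq_mul] at hS
  have hsub : ∑ i, (ε/4)*(w^m*(fi i*(l i)^2)) = (1/2) * ∑ i, fi i*((ε/2)*w^m*(l i)^2) := by
    rw [Finset.mul_sum]; refine Finset.sum_congr rfl fun i _ => by ring
  have hone : fi i1*((ε/2)*w^m*(l i1)^2) ≤ ∑ i, fi i*((ε/2)*w^m*(l i)^2) :=
    Finset.single_le_sum (f := fun i => fi i*((ε/2)*w^m*(l i)^2))
      (fun i _ => by have := hf i; positivity) (Finset.mem_univ i1)
  have hsplit : ∑ i, fi i*((ε/2)*w^m*(l i)^2 + 1) =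
      ∑ i, fi i*((ε/2)*w^m*(l i)^2) + ∑ i, fi i := by
    rw [← Finset.sum_add_distrib]; refine Finset.sum_congr rfl fun i _ => by ring
  have hf1 := hf i1
  set F := ∑ i, fi i with hF
  have hF0 : 0 < F := Finset.sum_pos (fun i _ => hf i) ⟨i1, Finset.mem_univ i1⟩
  have hA2 := mul_le_mul_of_nonneg_right hA'.le hf1.le
  have hcf : 0 ≤ c*fi i1 := by positivity
  have hεm : ε*m*(w^(m-1)*p) ≤ ε*m*(K1/w) := by gcongr
  rw [hsub, hsplit] at hS
  have hfin : (ε/8)*(w^m*(l i1)^2)*fi i1 + F ≤ (β + ε*m*K1)/w := by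
    have : (β + ε*m*K1)/w = β/w + ε*m*(K1/w) := by ring
    rw [this]
    linarith
  have hb0 : 6 ≤ β + ε*m*K1 := by
    have : 0 ≤ ε*m*K1 := by positivity
    linarith
  have hD0 : 0 < D := by rw [hD]; positivity
  have hle : (β + ε*m*K1)/w ≤ D/w := by
    rw [hD]; gcongr; nlinarith
  have hDw : 1 ≤ D/w := by
    rw [le_div_iff₀ hw, hD]; nlinarith
  have hpos : 0 ≤ (ε/8)*(w^m*(l i1)^2)*fi i1 := by positivity
  have hNN := hN (D/w) hDw (by linarith)
  have h20 : (ε/8)*(w^m*(l i1)^2)*(1/(N1*(D/w)^k)) ≤ D/w := by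
    have : (ε/8)*(w^m*(l i1)^2)*(1/(N1*(D/w)^k)) ≤ (ε/8)*(w^m*(l i1)^2)*fi i1 := by gcongr
    linarith
  rw [div_lt_iff₀ hεp] at hBB
  rw [mul_one_div, div_le_iff₀ (by positivity), div_pow] at h20
  have h21 : D/w*(N1*(D^k/w^k)) = N1*D^(k+1)/(w^(k+1)) := by
    rw [pow_succ, pow_succ]; field_simp
  rw [h21, le_div_iff₀ (by positivity)] at h20
  have h22 : w^(m+k+1) = w^m*w^(k+1) := by rw [← pow_add]; rfl
  rw [h22] at hBB
  linarith

theorem perm_mean {n : ℕ} {P : Matrix (Fin n) (Fin n) ℝ} (hP : P ∈ doublyStochastic ℝ (Fin n)) :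
    ∃ w : Equiv.Perm (Fin n) → ℝ, (∀ σ, 0 ≤ w σ) ∧ ∑ σ, w σ = 1 ∧
      ∀ v : Fin n → ℝ, Matrix.mulVec P v = ∑ σ, w σ • (v ∘ σ) := by
  obtain ⟨w, h0, h1, h2⟩ := exists_eq_sum_perm_of_mem_doublyStochastic hP
  refine ⟨w, h0, h1, fun v => ?_⟩
  rw [← h2, Matrix.sum_mulVec]
  refine Finset.sum_congr rfl fun σ _ => ?_
  rw [Matrix.smul_mulVec, Matrix.permMatrix_mulVec]

theorem cone_sum_pos {n : ℕ} (hn : 0 < n) {Γ : Set (Fin n → ℝ)} (hΓ : IsConvexInvariantCone Γ)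
    {lam : Fin n → ℝ} (hl : lam ∈ Γ) : 0 < ∑ i, lam i := by
  obtain ⟨ho, hne, hc, hcone, hadd, hperm⟩ := hΓ
  by_contra hs
  push Not at hs
  have hn' : (0:ℝ) < n := by exact_mod_cast hn
  set s : ℝ := (n:ℝ)⁻¹ * ∑ i, lam i with hsdef
  have hs0 : s ≤ 0 := mul_nonpos_of_nonneg_of_nonpos (by positivity) hs
  have hP : (Matrix.of fun _ _ => (n:ℝ)⁻¹ : Matrix (Fin n) (Fin n) ℝ) ∈
      doublyStochastic ℝ (Fin n) := by
    rw [mem_doublyStochastic_iff_sum]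
    refine ⟨fun i j => by simp, fun i => ?_, fun i => ?_⟩ <;> simp <;> field_simp
  obtain ⟨w, h0, h1, h2⟩ := perm_mean hP
  have hmem : (fun _ => s : Fin n → ℝ) ∈ Γ := by
    have := hc.sum_mem (t := Finset.univ) (w := w) (z := fun σ => lam ∘ σ)
      (fun σ _ => h0 σ) h1 (fun σ _ => hperm lam hl σ)
    rw [← h2] at this
    convert this using 1
    ext i
    simp [Matrix.mulVec, dotProduct, hsdef, Finset.mul_sum]
  have hcont : Continuous fun t : ℝ => (fun _ => s - t : Fin n → ℝ) := by fun_prop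
  have hev : ∀ᶠ t : ℝ in nhds 0, (fun _ => s - t : Fin n → ℝ) ∈ Γ :=
    hcont.continuousAt.eventually (ho.mem_nhds (by simpa using hmem))
  obtain ⟨δ, hδ, hball⟩ := Metric.eventually_nhds_iff.1 hev
  have hneg : (fun _ => s - δ/2 : Fin n → ℝ) ∈ Γ := hball (by
    rw [Real.dist_eq, sub_zero, abs_of_pos (by positivity)]; linarith)
  apply hne
  ext v
  simp only [Set.mem_univ, iff_true]
  have hq : 0 < δ/2 - s := by linarith
  set T := (∑ i, |v i|) + 1 with hT
  have hT0 : 0 < T := by positivity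
  have hm := hcone _ hneg (T/(δ/2-s)) (by positivity)
  have hm2 := hadd _ hm (fun i => v i + T) (fun i => by
    have : |v i| ≤ ∑ i, |v i| := Finset.single_le_sum (f := fun i => |v i|)
      (fun i _ => abs_nonneg _) (Finset.mem_univ i)
    have := neg_abs_le (v i)
    simp only
    linarith)
  convert hm2 using 1
  ext i
  simp only [Pi.add_apply, Pi.smul_apply, smul_eq_mul]
  have e : T / (δ/2 - s) * (s - δ/2) = -T := by
    rw [div_mul_eq_mul_div, div_eq_iff hq.ne']; ring
  rw [e]
  ring

theorem f_diff {n : ℕ} {Γ : Set (Fin n → ℝ)} {f : (Fin n → ℝ) → ℝ}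
    (hΓ : IsConvexInvariantCone Γ) (hf : IsConcaveEllipticHessianOp Γ f) {lam : Fin n → ℝ}
    (hl : lam ∈ Γ) : DifferentiableAt ℝ f lam :=
  (hf.1.contDiffAt (hΓ.1.mem_nhds hl)).differentiableAt (by norm_num)

theorem fderiv_eq_sum {n : ℕ} (f : (Fin n → ℝ) → ℝ) (lam mu : Fin n → ℝ) :
    fderiv ℝ f lam mu = ∑ i, fpd f i lam * mu i := by
  have e : mu = ∑ i, mu i • Pi.single i (1:ℝ) := by
    ext j; simp [Finset.sum_apply, Pi.single_apply]
  conv_lhs => rw [e]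
  rw [map_sum]
  refine Finset.sum_congr rfl fun i _ => ?_
  rw [map_smul, smul_eq_mul, mul_comm]; rfl

theorem euler_f {n : ℕ} {Γ : Set (Fin n → ℝ)} {f : (Fin n → ℝ) → ℝ}
    (hΓ : IsConvexInvariantCone Γ) (hf : IsConcaveEllipticHessianOp Γ f) {lam : Fin n → ℝ}
    (hl : lam ∈ Γ) : ∑ i, fpd f i lam * lam i = f lam := by
  rw [← fderiv_eq_sum]
  have h1 : HasDerivAt (fun t : ℝ => f (t • lam)) (fderiv ℝ f lam lam) 1 := by
    have hd : HasDerivAt (fun t : ℝ => t • lam) lam 1 := by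
      simpa using (hasDerivAt_id (1:ℝ)).smul_const lam
    have hf' : HasFDerivAt f (fderiv ℝ f lam) ((1:ℝ) • lam) := by
      rw [one_smul]; exact (f_diff hΓ hf hl).hasFDerivAt
    exact hf'.comp_hasDerivAt 1 hd
  have h2 : HasDerivAt (fun t : ℝ => t * f lam) (f lam) 1 := by
    simpa using (hasDerivAt_id (1:ℝ)).mul_const (f lam)
  have h3 : (fun t : ℝ => f (t • lam)) =ᶠ[nhds 1] fun t => t * f lam := by
    filter_upwards [lt_mem_nhds (zero_lt_one' ℝ)] with t ht
    exact hf.2.2.2.2.2 lam hl t ht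
  exact h1.unique (h2.congr_of_eventuallyEq h3)

theorem concave_f {n : ℕ} {Γ : Set (Fin n → ℝ)} {f : (Fin n → ℝ) → ℝ}
    (hΓ : IsConvexInvariantCone Γ) (hf : IsConcaveEllipticHessianOp Γ f) {lam mu : Fin n → ℝ}
    (hl : lam ∈ Γ) (hm : mu ∈ Γ) : f mu ≤ ∑ i, fpd f i lam * mu i := by
  rw [← fderiv_eq_sum]
  have hsup : ∀ x ∈ Γ, ∀ y ∈ Γ, f x + f y ≤ f (x + y) := by
    intro x hx y hy
    have h := hf.2.1.2 hx hy (show (0:ℝ) ≤ 1/2 by norm_num) (show (0:ℝ) ≤ 1/2 by norm_num)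
      (by norm_num)
    have hxy : (1/2:ℝ) • x + (1/2:ℝ) • y ∈ Γ := hΓ.2.2.1 hx hy (by norm_num) (by norm_num) (by norm_num)
    have h2 := hf.2.2.2.2.2 _ hxy 2 (by norm_num)
    have e : (2:ℝ) • ((1/2:ℝ) • x + (1/2:ℝ) • y) = x + y := by
      rw [smul_add, smul_smul, smul_smul]; norm_num
    rw [e] at h2
    simp only [smul_eq_mul] at h
    linarith
  have h1 : HasDerivAt (fun t : ℝ => f (lam + t • mu)) (fderiv ℝ f lam mu) 0 := by
    have hd : HasDerivAt (fun t : ℝ => lam + t • mu) mu 0 := by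
      simpa using ((hasDerivAt_id (0:ℝ)).smul_const mu).const_add lam
    have hf' : HasFDerivAt f (fderiv ℝ f lam) (lam + (0:ℝ) • mu) := by
      rw [zero_smul, add_zero]; exact (f_diff hΓ hf hl).hasFDerivAt
    exact hf'.comp_hasDerivAt 0 hd
  have h2 := h1.tendsto_slope_zero_right
  refine ge_of_tendsto h2 ?_
  filter_upwards [self_mem_nhdsWithin] with t ht
  have ht : 0 < t := ht
  have h3 := hsup lam hl (t • mu) (hΓ.2.2.2.1 mu hm t ht)
  rw [hf.2.2.2.2.2 mu hm t ht] at h3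
  simp only [zero_add, zero_smul, add_zero, smul_eq_mul]
  rw [← div_eq_inv_mul, le_div_iff₀ ht]
  linarith

theorem schur_f {n : ℕ} {Γ : Set (Fin n → ℝ)} {f : (Fin n → ℝ) → ℝ}
    (hΓ : IsConvexInvariantCone Γ) (hf : IsConcaveEllipticHessianOp Γ f) {lam mu : Fin n → ℝ}
    (hl : lam ∈ Γ) (hm : mu ∈ Γ) {P : Matrix (Fin n) (Fin n) ℝ}
    (hP : P ∈ doublyStochastic ℝ (Fin n)) :
    f mu ≤ ∑ i, fpd f i lam * (∑ j, P i j * mu j) := by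
  obtain ⟨w, h0, h1, h2⟩ := perm_mean hP
  have h3 : ∀ i, ∑ j, P i j * mu j = ∑ σ, w σ * mu (σ i) := by
    intro i
    have := congrFun (h2 mu) i
    simpa [Matrix.mulVec, dotProduct] using this
  calc f mu = ∑ σ, w σ * f mu := by rw [← Finset.sum_mul, h1, one_mul]
    _ ≤ ∑ σ, w σ * ∑ i, fpd f i lam * mu (σ i) := by
        refine Finset.sum_le_sum fun σ _ => mul_le_mul_of_nonneg_left ?_ (h0 σ)
        have := concave_f hΓ hf hl (hΓ.2.2.2.2.2 mu hm σ)
        rwa [hf.2.2.1 mu hm σ] at this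
    _ = _ := by
        simp only [h3, Finset.mul_sum]
        rw [Finset.sum_comm]
        refine Finset.sum_congr rfl fun i _ => Finset.sum_congr rfl fun σ _ => by ring

section calc1
variable {n : ℕ}

theorem D2_coord {u : EuclideanSpace ℝ (Fin n) → ℝ} {x : EuclideanSpace ℝ (Fin n)}
    (v w : EuclideanSpace ℝ (Fin n)) :
    fderiv ℝ (fderiv ℝ u) x v w = ∑ i, v i * (Matrix.mulVec (hessianMatrix u x) w) i := by
  have hv : ∀ v : EuclideanSpace ℝ (Fin n), v = ∑ i, v i • EuclideanSpace.single i (1:ℝ) := by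
    intro v; ext j; simp [Finset.sum_apply, Pi.single_apply]
  conv_lhs => rw [hv v, hv w]
  simp only [map_sum, map_smul, sum_apply, smul_apply,
    smul_eq_mul, Matrix.mulVec, dotProduct, hessianMatrix, iteratedFDeriv_two_apply,
    Matrix.cons_val_zero, Matrix.cons_val_one, Finset.mul_sum]
  rw [Finset.sum_comm]
  refine Finset.sum_congr rfl fun i _ => Finset.sum_congr rfl fun j _ => by ring

theorem D2_symm {u : EuclideanSpace ℝ (Fin n) → ℝ} {x : EuclideanSpace ℝ (Fin n)}
    (hu : ContDiffAt ℝ 2 u x) (v w : EuclideanSpace ℝ (Fin n)) :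
    fderiv ℝ (fderiv ℝ u) x v w = fderiv ℝ (fderiv ℝ u) x w v :=
  (hu.isSymmSndFDerivAt (by simp)) v w

theorem spec_basis {u : EuclideanSpace ℝ (Fin n) → ℝ} {x : EuclideanSpace ℝ (Fin n)}
    (hu : ContDiffAt ℝ 2 u x) :
    ∃ b : OrthonormalBasis (Fin n) ℝ (EuclideanSpace ℝ (Fin n)), ∀ i j,
      fderiv ℝ (fderiv ℝ u) x (b i) (b j) = if i = j then hessEigen u x i else 0 := by
  have hH : (hessianMatrix u x).IsHermitian := by
    ext i j
    simp only [Matrix.conjTranspose_apply, hessianMatrix, star_trivial, iteratedFDeriv_two_apply,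
      Matrix.cons_val_zero, Matrix.cons_val_one]
    exact D2_symm hu _ _
  refine ⟨hH.eigenvectorBasis, fun i j => ?_⟩
  have hE : hessEigen u x = hH.eigenvalues := by rw [hessEigen, dif_pos hH]
  rw [D2_coord, hH.mulVec_eigenvectorBasis, hE]
  have h1 := hH.eigenvectorBasis.inner_eq_ite i j
  have h2 : inner ℝ (hH.eigenvectorBasis i) (hH.eigenvectorBasis j)
      = ∑ k, hH.eigenvectorBasis i k * hH.eigenvectorBasis j k := by
    rw [PiLp.inner_apply]; simp [mul_comm]
  have h3 : ∑ k, (hH.eigenvectorBasis i) k * (hH.eigenvalues j • ⇑(hH.eigenvectorBasis j)) k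
      = hH.eigenvalues j * ∑ k, hH.eigenvectorBasis i k * hH.eigenvectorBasis j k := by
    rw [Finset.mul_sum]
    refine Finset.sum_congr rfl fun k _ => by simp; ring
  rw [h3, ← h2, h1]
  split_ifs with h
  · rw [h, mul_one]
  · rw [mul_zero]

theorem diag_form {lam : Fin n → ℝ} {A : EuclideanSpace ℝ (Fin n) →L[ℝ] EuclideanSpace ℝ (Fin n) →L[ℝ] ℝ}
    {b : OrthonormalBasis (Fin n) ℝ (EuclideanSpace ℝ (Fin n))}
    (hb : ∀ i j, A (b i) (b j) = if i = j then lam i else 0) (v w : EuclideanSpace ℝ (Fin n)) :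
    A v w = ∑ i, lam i * (inner ℝ (b i) v * inner ℝ (b i) w) := by
  conv_lhs => rw [← b.sum_repr' v, ← b.sum_repr' w]
  simp only [map_sum, map_smul, sum_apply, smul_apply,
    smul_eq_mul, hb, mul_ite, mul_zero, Finset.sum_ite_eq', Finset.mem_univ, if_true]
  refine Finset.sum_congr rfl fun i _ => by ring

theorem schur_D2 {Γ : Set (Fin n → ℝ)} {f : (Fin n → ℝ) → ℝ}
    (hΓ : IsConvexInvariantCone Γ) (hf : IsConcaveEllipticHessianOp Γ f)
    {u : EuclideanSpace ℝ (Fin n) → ℝ} {y : EuclideanSpace ℝ (Fin n)}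
    (hu : ContDiffAt ℝ 2 u y) (hy : hessEigen u y ∈ Γ) (hfy : f (hessEigen u y) = 1)
    {lam : Fin n → ℝ} (hl : lam ∈ Γ)
    (e : OrthonormalBasis (Fin n) ℝ (EuclideanSpace ℝ (Fin n))) :
    1 ≤ ∑ i, fpd f i lam * fderiv ℝ (fderiv ℝ u) y (e i) (e i) := by
  obtain ⟨b, hb⟩ := spec_basis hu
  have hP : (Matrix.of fun i j => (inner ℝ (b j) (e i))^2 : Matrix (Fin n) (Fin n) ℝ) ∈
      doublyStochastic ℝ (Fin n) := by
    rw [mem_doublyStochastic_iff_sum]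
    refine ⟨fun i j => by simp only [Matrix.of_apply]; positivity, fun i => ?_, fun j => ?_⟩
    · have := b.sum_sq_norm_inner_right (e i)
      simpa using this
    · have := e.sum_sq_norm_inner_left (b j)
      simpa using this
  have := schur_f hΓ hf hl hy hP
  rw [hfy] at this
  refine this.trans (le_of_eq ?_)
  refine Finset.sum_congr rfl fun i _ => ?_
  rw [diag_form hb]
  congr 1
  refine Finset.sum_congr rfl fun j _ => ?_
  simp only [Matrix.of_apply]; ring

end calc1

section calc2
set_option maxSynthPendingDepth 5
variable {n : ℕ} {E : Type*} [NormedAddCommGroup E] [InnerProductSpace ℝ E] [CompleteSpace E]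

theorem rot_ineq (g : Fin n → ℝ) {Ω : Set E} (hΩ : IsOpen Ω)
    {D2 : E → (E →L[ℝ] E →L[ℝ] ℝ)} {D3 : E → (E →L[ℝ] E →L[ℝ] E →L[ℝ] ℝ)}
    (hD3 : ∀ y ∈ Ω, HasFDerivAt D2 (D3 y) y) {x : E} (hx : x ∈ Ω)
    {D4 : E →L[ℝ] E →L[ℝ] E →L[ℝ] E →L[ℝ] ℝ} (hD4 : HasFDerivAt D3 D4 x)
    {b : OrthonormalBasis (Fin n) ℝ E}
    (hgmin : ∀ y ∈ Ω, ∀ e : OrthonormalBasis (Fin n) ℝ E,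
      ∑ i, g i * D2 x (b i) (b i) ≤ ∑ i, g i * D2 y (e i) (e i))
    (S : E →L[ℝ] E)
    (hS : S ∈ skewAdjoint (E →L[ℝ] E))
    (v : E) :
    ∑ i, g i * ((D3 x v (b i) + D2 x (S (b i))) (b i) + D2 x (b i) (S (b i))) = 0 ∧
    0 ≤ ∑ i, g i *
      (((D4 v v (b i) + D3 x v (S (b i))) + (D3 x v (S (b i)) + D2 x (S (S (b i))))) (b i)
        + (D3 x v (b i) + D2 x (S (b i))) (S (b i))
        + ((D3 x v (b i) + D2 x (S (b i))) (S (b i)) + D2 x (b i) (S (S (b i))))) := by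
  set U : ℝ → (E →L[ℝ] E) :=
    fun t => NormedSpace.exp (t • S) with hU
  have hU0 : U 0 = 1 := by simp [hU]
  have hUd : ∀ t (w), HasDerivAt (fun t => U t w) (S (U t w)) t := by
    intro t w
    have h := hasDerivAt_exp_smul_const' (𝕂 := ℝ) S t
    have := h.clm_apply (hasDerivAt_const t w)
    simpa using this
  have hUu : ∀ t, U t ∈ unitary (E →L[ℝ] E) := by
    intro t
    letI : NormedAlgebra ℚ (E →L[ℝ] E) := NormedAlgebra.restrictScalars ℚ ℝ (E →L[ℝ] E)
    apply NormedSpace.exp_mem_unitary_of_mem_skewAdjoint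
    exact skewAdjoint.smul_mem t hS
  set c : ℝ → E := fun t => x + t • v with hc
  have hc0 : c 0 = x := by simp [hc]
  have hcd : ∀ t, HasDerivAt c v t := by
    intro t
    have h := ((hasDerivAt_id t).smul_const v).const_add x
    rw [one_smul] at h
    exact h
  have hcΩ : ∀ᶠ t in nhds (0:ℝ), c t ∈ Ω :=
    (hcd 0).continuousAt.eventually (hΩ.mem_nhds (by rw [hc0]; exact hx))
  set ψ : ℝ → ℝ := fun t => ∑ i, g i * D2 (c t) (U t (b i)) (U t (b i)) with hψ
  set ψ' : ℝ → ℝ := fun t => ∑ i, g i *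
    ((D3 (c t) v (U t (b i)) + D2 (c t) (S (U t (b i)))) (U t (b i))
      + D2 (c t) (U t (b i)) (S (U t (b i)))) with hψ'
  have h1 : ∀ᶠ t in nhds (0:ℝ), HasDerivAt ψ (ψ' t) t := by
    filter_upwards [hcΩ] with t ht
    refine HasDerivAt.fun_sum fun i _ => ?_
    refine HasDerivAt.const_mul _ ?_
    have hQ : HasDerivAt (fun t => D2 (c t)) (D3 (c t) v) t :=
      (hD3 _ ht).comp_hasDerivAt t (hcd t)
    exact (hQ.clm_apply (hUd t (b i))).clm_apply (hUd t (b i))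
  have h2 : HasDerivAt ψ' (∑ i, g i *
      (((D4 v v (b i) + D3 x v (S (b i))) + (D3 x v (S (b i)) + D2 x (S (S (b i))))) (b i)
        + (D3 x v (b i) + D2 x (S (b i))) (S (b i))
        + ((D3 x v (b i) + D2 x (S (b i))) (S (b i)) + D2 x (b i) (S (S (b i)))))) 0 := by
    refine HasDerivAt.fun_sum fun i _ => ?_
    refine HasDerivAt.const_mul _ ?_
    have hQ : HasDerivAt (fun t => D2 (c t)) (D3 x v) 0 := by
      have : HasFDerivAt D2 (D3 x) (c 0) := by rw [hc0]; exact hD3 x hx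
      exact this.comp_hasDerivAt 0 (hcd 0)
    have hQ3 : HasDerivAt (fun t => D3 (c t) v) (D4 v v) 0 := by
      have : HasFDerivAt D3 D4 (c 0) := by rw [hc0]; exact hD4
      have := (this.comp_hasDerivAt 0 (hcd 0)).clm_apply (hasDerivAt_const 0 v)
      simpa using this
    have hb0 : HasDerivAt (fun t => U t (b i)) (S (b i)) 0 := by
      simpa [hU0] using hUd 0 (b i)
    have hSb0 : HasDerivAt (fun t => S (U t (b i))) (S (S (b i))) 0 :=
      S.hasFDerivAt.comp_hasDerivAt 0 hb0
    have := (((hQ3.clm_apply hb0).fun_add (hQ.clm_apply hSb0)).clm_apply hb0).fun_add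
      ((hQ.clm_apply hb0).clm_apply hSb0)
    simpa [hU0, hc0] using this
  have hmin : ∀ᶠ t in nhds (0:ℝ), ψ 0 ≤ ψ t := by
    filter_upwards [hcΩ] with t ht
    have := hgmin _ ht (b.map (Unitary.linearIsometryEquiv ⟨U t, hUu t⟩))
    simp only [OrthonormalBasis.map_apply] at this
    simp only [hψ, hU0, hc0]
    exact this
  have hmax : IsLocalMax (fun t => - ψ t) 0 := by
    filter_upwards [hmin] with t ht
    exact neg_le_neg ht
  have := isLocalMax_second (ψ := fun t => - ψ t) (ψ' := fun t => - ψ' t)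
    (h1.mono fun t ht => ht.neg) h2.neg hmax
  constructor
  · have h3 := this.1
    simp only [hψ', hU0, hc0, neg_eq_zero] at h3
    exact h3
  · linarith [this.2]
end calc2

section calc3
set_option maxSynthPendingDepth 5
variable {n : ℕ} {E : Type*} [NormedAddCommGroup E] [InnerProductSpace ℝ E] [CompleteSpace E]

theorem rot_skew (p s : E) :
    ((innerSL ℝ p).smulRight s - (innerSL ℝ s).smulRight p : E →L[ℝ] E) ∈
      skewAdjoint (E →L[ℝ] E) := by
  rw [skewAdjoint.mem_iff, ContinuousLinearMap.star_eq_adjoint]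
  symm
  rw [ContinuousLinearMap.eq_adjoint_iff]
  intro x y
  simp [inner_sub_left, inner_sub_right, inner_smul_left, inner_smul_right]
  rw [real_inner_comm x s, real_inner_comm x p]
  ring

set_option maxHeartbeats 1000000 in
theorem third_gen (g lam : Fin n → ℝ) {Ω : Set E} (hΩ : IsOpen Ω)
    {D2 : E → (E →L[ℝ] E →L[ℝ] ℝ)} {D3 : E → (E →L[ℝ] E →L[ℝ] E →L[ℝ] ℝ)}
    (hD3 : ∀ y ∈ Ω, HasFDerivAt D2 (D3 y) y) {x : E} (hx : x ∈ Ω)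
    {D4 : E →L[ℝ] E →L[ℝ] E →L[ℝ] E →L[ℝ] ℝ} (hD4 : HasFDerivAt D3 D4 x)
    {b : OrthonormalBasis (Fin n) ℝ E}
    (hgmin : ∀ y ∈ Ω, ∀ e : OrthonormalBasis (Fin n) ℝ E,
      ∑ i, g i * D2 x (b i) (b i) ≤ ∑ i, g i * D2 y (e i) (e i))
    (hb : ∀ i j, D2 x (b i) (b j) = if i = j then lam i else 0)
    (i1 : Fin n) (a : Fin n → ℝ) (ha1 : ∀ j, D3 x (b i1) (b i1) (b j) = a j)
    (ha2 : ∀ j, D3 x (b i1) (b j) (b i1) = a j)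
    (s : Fin n → ℝ) (hs : s i1 = 0) :
    0 ≤ ∑ i, g i * D4 (b i1) (b i1) (b i) (b i)
      + ∑ i, (4 * (s i * a i) * (g i1 - g i) + 2 * (s i)^2 * (lam i1 - lam i) * (g i - g i1)) := by
  set σ : E := ∑ j, s j • b j with hσ
  have h := (rot_ineq g hΩ hD3 hx hD4 hgmin _ (rot_skew (b i1) σ) (b i1)).2
  have hiσ : ∀ i, inner ℝ σ (b i) = s i := by
    intro i
    rw [hσ, sum_inner]
    simp [inner_smul_left, b.inner_eq_ite]
  have hiσ' : inner ℝ (b i1) σ = 0 := by rw [real_inner_comm, hiσ, hs]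
  have hσσ : inner ℝ σ σ = ∑ j, (s j)^2 := by
    conv_lhs => rw [hσ, sum_inner]
    refine Finset.sum_congr rfl fun j _ => ?_
    rw [← hσ, inner_smul_left, real_inner_comm, hiσ]; simp [sq]
  have hD2σr : ∀ i, D2 x (b i) σ = s i * lam i := by
    intro i
    rw [hσ]; simp [map_sum, hb]
  have hD2σl : ∀ i, D2 x σ (b i) = s i * lam i := by
    intro i
    rw [hσ]; simp [map_sum, hb]
  have hD2σσ : D2 x σ σ = ∑ j, (s j)^2 * lam j := by
    have hz : ∀ z, D2 x σ z = ∑ j, s j * D2 x (b j) z := by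
      intro z
      rw [hσ]; simp [map_sum]
    rw [hz σ]
    simp only [hD2σr]
    refine Finset.sum_congr rfl fun j _ => by ring
  have hD3r : D3 x (b i1) (b i1) σ = ∑ j, s j * a j := by
    rw [hσ]; simp [map_sum, ha1]
  have hD3l : D3 x (b i1) σ (b i1) = ∑ j, s j * a j := by
    rw [hσ]; simp [map_sum, ha2]
  set S : E →L[ℝ] E := ((innerSL ℝ (b i1)).smulRight σ - (innerSL ℝ σ).smulRight (b i1)) with hS
  have hSb : ∀ i, S (b i) = (if i1 = i then (1:ℝ) else 0) • σ - s i • b i1 := by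
    intro i
    simp [hS, b.inner_eq_ite, hiσ]
  have hSσ : S σ = - (∑ j, (s j)^2) • b i1 := by
    rw [← hσσ]; simp [hS, hiσ']
  refine h.trans (le_of_eq ?_)
  have hterm : ∀ i, g i *
      (((D4 (b i1) (b i1) (b i) + D3 x (b i1) (S (b i))) + (D3 x (b i1) (S (b i)) + D2 x (S (S (b i))))) (b i)
        + (D3 x (b i1) (b i) + D2 x (S (b i))) (S (b i))
        + ((D3 x (b i1) (b i) + D2 x (S (b i))) (S (b i)) + D2 x (b i) (S (S (b i))))) =
      g i * D4 (b i1) (b i1) (b i) (b i) +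
      ((if i1 = i then g i1 * (4 * ∑ j, s j * a j + 2 * ∑ j, (s j)^2 * lam j
          - 2 * lam i1 * ∑ j, (s j)^2) else 0)
        + (- 4 * (s i * a i) * g i + 2 * (s i)^2 * (lam i1 - lam i) * g i)) := by
    intro i
    by_cases hi : i1 = i
    · subst hi
      simp [hSb, hSσ, hs, hD2σr, hD2σl, hD2σσ, hD3r, hD3l, hb]
      ring
    · have hi' : ¬ i = i1 := fun h => hi h.symm
      simp [hSb, hSσ, hi, hi', hs, hD2σr, hD2σl, hD2σσ, hD3r, hD3l, hb, ha1, ha2]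
      ring
  rw [Finset.sum_congr rfl fun i _ => hterm i, Finset.sum_add_distrib]
  congr 1
  rw [Finset.sum_add_distrib, Finset.sum_ite_eq, if_pos (Finset.mem_univ _)]
  simp only [Finset.mul_sum]
  rw [← Finset.sum_add_distrib, ← Finset.sum_sub_distrib, Finset.mul_sum, ← Finset.sum_add_distrib]
  refine Finset.sum_congr rfl fun j _ => by ring

theorem third_J {f f1 l l1 a : ℝ} (h1 : 6 * f1 < f) (h2 : -l1/4 ≤ l) (hf : 0 < f1) (hl : 0 < l1) :
    4 * (a/((5/4)*l1) * a) * (f1 - f) + 2 * (a/((5/4)*l1))^2 * (l1 - l) * (f - f1)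
      ≤ - l1 * ((4/3)*(f*(a/l1)^2)) := by
  obtain ⟨r, hr⟩ : ∃ r, r = a/l1 := ⟨_, rfl⟩
  have ha : a = r * l1 := by rw [hr]; field_simp
  have e1 : a/((5/4)*l1) = (4/5)*r := by rw [ha]; field_simp
  rw [e1, ← hr, ha]
  have hlr : 0 ≤ l1 * r^2 := by positivity
  have q1 : 0 ≤ r^2 * (f - f1) * (l1/4 + l) :=
    mul_nonneg (mul_nonneg (sq_nonneg r) (by linarith)) (by linarith)
  have q2 : 0 ≤ (l1 * r^2) * (f - 6*f1) := mul_nonneg hlr (by linarith)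
  nlinarith

theorem third_final (g lam : Fin n → ℝ) {Ω : Set E} (hΩ : IsOpen Ω)
    {D2 : E → (E →L[ℝ] E →L[ℝ] ℝ)} {D3 : E → (E →L[ℝ] E →L[ℝ] E →L[ℝ] ℝ)}
    (hD3 : ∀ y ∈ Ω, HasFDerivAt D2 (D3 y) y) {x : E} (hx : x ∈ Ω)
    {D4 : E →L[ℝ] E →L[ℝ] E →L[ℝ] E →L[ℝ] ℝ} (hD4 : HasFDerivAt D3 D4 x)
    {b : OrthonormalBasis (Fin n) ℝ E}
    (hgmin : ∀ y ∈ Ω, ∀ e : OrthonormalBasis (Fin n) ℝ E,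
      ∑ i, g i * D2 x (b i) (b i) ≤ ∑ i, g i * D2 y (e i) (e i))
    (hb : ∀ i j, D2 x (b i) (b j) = if i = j then lam i else 0)
    (i1 : Fin n) (a : Fin n → ℝ) (ha1 : ∀ j, D3 x (b i1) (b i1) (b j) = a j)
    (ha2 : ∀ j, D3 x (b i1) (b j) (b i1) = a j) (hg : ∀ i, 0 < g i) (hl1 : 0 < lam i1) :
    ∑ i, (if 6*g i1 < g i ∧ -(lam i1)/4 ≤ lam i then (4/3)*(g i*(a i / lam i1)^2) else 0)
      ≤ (∑ i, g i * D4 (b i1) (b i1) (b i) (b i)) / lam i1 := by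
  have h := third_gen g lam hΩ hD3 hx hD4 hgmin hb i1 a ha1 ha2
    (fun i => if 6*g i1 < g i ∧ -(lam i1)/4 ≤ lam i then a i/((5/4)*lam i1) else 0)
    (by rw [if_neg]; intro h; linarith [h.1, hg i1])
  rw [le_div_iff₀ hl1, Finset.sum_mul]
  have h2 : ∑ i, (4 * ((if 6*g i1 < g i ∧ -(lam i1)/4 ≤ lam i then a i/((5/4)*lam i1) else 0) * a i)
      * (g i1 - g i) + 2 * (if 6*g i1 < g i ∧ -(lam i1)/4 ≤ lam i then a i/((5/4)*lam i1) else 0)^2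
        * (lam i1 - lam i) * (g i - g i1)) ≤
      ∑ i, - ((if 6*g i1 < g i ∧ -(lam i1)/4 ≤ lam i then (4/3)*(g i*(a i / lam i1)^2) else 0)
        * lam i1) := by
    refine Finset.sum_le_sum fun i _ => ?_
    split_ifs with hc
    · have := third_J (a := a i) hc.1 hc.2 (hg i1) hl1
      linarith
    · simp
  rw [Finset.sum_neg_distrib] at h2
  linarith

theorem third_zero (g : Fin n → ℝ) {Ω : Set E} (hΩ : IsOpen Ω)
    {D2 : E → (E →L[ℝ] E →L[ℝ] ℝ)} {D3 : E → (E →L[ℝ] E →L[ℝ] E →L[ℝ] ℝ)}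
    (hD3 : ∀ y ∈ Ω, HasFDerivAt D2 (D3 y) y) {x : E} (hx : x ∈ Ω)
    {D4 : E →L[ℝ] E →L[ℝ] E →L[ℝ] E →L[ℝ] ℝ} (hD4 : HasFDerivAt D3 D4 x)
    {b : OrthonormalBasis (Fin n) ℝ E}
    (hgmin : ∀ y ∈ Ω, ∀ e : OrthonormalBasis (Fin n) ℝ E,
      ∑ i, g i * D2 x (b i) (b i) ≤ ∑ i, g i * D2 y (e i) (e i)) (v : E) :
    ∑ i, g i * D3 x v (b i) (b i) = 0 := by
  have h := (rot_ineq g hΩ hD3 hx hD4 hgmin 0 (zero_mem _) v).1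
  simpa using h

theorem eval2 {F : Type*} [NormedAddCommGroup F] [NormedSpace ℝ F] {x : E}
    {G : E → (E →L[ℝ] E →L[ℝ] F)} {D : E →L[ℝ] E →L[ℝ] E →L[ℝ] F}
    (h : HasFDerivAt G D x) (v w z : E) : fderiv ℝ (fun y => G y w z) x v = D v w z := by
  have h1 := (h.clm_apply (hasFDerivAt_const w x)).clm_apply (hasFDerivAt_const z x)
  rw [h1.fderiv]
  simp

theorem eval3 {F : Type*} [NormedAddCommGroup F] [NormedSpace ℝ F] {x : E}
    {G : E → (E →L[ℝ] E →L[ℝ] E →L[ℝ] F)} {D : E →L[ℝ] E →L[ℝ] E →L[ℝ] E →L[ℝ] F}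
    (h : HasFDerivAt G D x) (v w z p : E) : fderiv ℝ (fun y => G y w z p) x v = D v w z p := by
  have h1 := ((h.clm_apply (hasFDerivAt_const w x)).clm_apply
    (hasFDerivAt_const z x)).clm_apply (hasFDerivAt_const p x)
  rw [h1.fderiv]
  simp

/-- Symmetries of the third and fourth derivative. -/
theorem D3_symm {F : Type*} [NormedAddCommGroup F] [NormedSpace ℝ F]
    {u : E → F} {x : E} (hu : ContDiffAt ℝ 4 u x) (v w z : E) :
    fderiv ℝ (fderiv ℝ (fderiv ℝ u)) x v w z = fderiv ℝ (fderiv ℝ (fderiv ℝ u)) x w v z ∧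
    fderiv ℝ (fderiv ℝ (fderiv ℝ u)) x v w z = fderiv ℝ (fderiv ℝ (fderiv ℝ u)) x v z w := by
  have h1 : ContDiffAt ℝ 3 (fderiv ℝ u) x := hu.fderiv_right (by norm_num)
  have h2 : ContDiffAt ℝ 2 (fderiv ℝ (fderiv ℝ u)) x := h1.fderiv_right (by norm_num)
  constructor
  · have := (h1.isSymmSndFDerivAt (by simp; norm_num)) v w
    rw [this]
  · have hs : (fun y => fderiv ℝ (fderiv ℝ u) y w z) =ᶠ[nhds x]
        (fun y => fderiv ℝ (fderiv ℝ u) y z w) := by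
      filter_upwards [hu.eventually (by simp)] with y hy
      exact (hy.isSymmSndFDerivAt (by simp; norm_num)) w z
    have hd := eval2 (h2.differentiableAt (by norm_num)).hasFDerivAt v
    rw [← hd, ← hd, hs.fderiv_eq]

theorem D4_symm {u : E → ℝ} {x : E} (hu : ContDiffAt ℝ 5 u x) (p q : E) :
    fderiv ℝ (fderiv ℝ (fderiv ℝ (fderiv ℝ u))) x p p q q
      = fderiv ℝ (fderiv ℝ (fderiv ℝ (fderiv ℝ u))) x q q p p := by
  have h1 : ContDiffAt ℝ 4 (fderiv ℝ u) x := hu.fderiv_right (by norm_num)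
  have h2 : ContDiffAt ℝ 3 (fderiv ℝ (fderiv ℝ u)) x := h1.fderiv_right (by norm_num)
  have h3 : ContDiffAt ℝ 2 (fderiv ℝ (fderiv ℝ (fderiv ℝ u))) x := h2.fderiv_right (by norm_num)
  set D := fderiv ℝ (fderiv ℝ (fderiv ℝ (fderiv ℝ u))) x with hD
  have s12 : ∀ a b c d, D a b c d = D b a c d := by
    intro a b c d
    rw [(h2.isSymmSndFDerivAt (by simp; norm_num)) a b]
  have s23 : ∀ a b c d, D a b c d = D a c b d := fun a b c d => by
    have := ((D3_symm h1 a b c).2)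
    rw [this]
  have s34 : ∀ a b c d, D a b c d = D a b d c := by
    intro a w z v
    have hs : (fun y => fderiv ℝ (fderiv ℝ (fderiv ℝ u)) y w z v) =ᶠ[nhds x]
        (fun y => fderiv ℝ (fderiv ℝ (fderiv ℝ u)) y w v z) := by
      filter_upwards [hu.eventually (by simp)] with y hy
      exact (D3_symm (hy.of_le (by norm_num)) w z v).2
    have hd := eval3 (h3.differentiableAt (by norm_num)).hasFDerivAt a
    rw [hD, ← hd, ← hd, hs.fderiv_eq]
  rw [s23 p p q q, s12 p q p q, s34 q p p q, s23 q p q p]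
end calc3

section calc4
set_option maxSynthPendingDepth 5

theorem one_dim {a a' w w' p p' q q' : ℝ → ℝ} {a2 w2 p2 q2 β ε B : ℝ} {m : ℕ} (hm : 2 ≤ m)
    (ha : ∀ᶠ t in nhds (0:ℝ), HasDerivAt a (a' t) t) (ha2 : HasDerivAt a' a2 0)
    (hw : ∀ᶠ t in nhds (0:ℝ), HasDerivAt w (w' t) t) (hw2 : HasDerivAt w' w2 0)
    (hp : ∀ᶠ t in nhds (0:ℝ), HasDerivAt p (p' t) t) (hp2 : HasDerivAt p' p2 0)
    (hq : ∀ᶠ t in nhds (0:ℝ), HasDerivAt q (q' t) t) (hq2 : HasDerivAt q' q2 0)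
    (ha0 : 0 < a 0) (hw0 : 0 < w 0) (hp0 : 0 ≤ p 0) (hε : 0 ≤ ε)
    (hmax : IsLocalMax (fun t => Real.log (a t) + β * Real.log (w t)
      + (ε * (w t ^ m * p t) + B/2 * q t)) 0) :
    a' 0 / a 0 + β * (w' 0 / w 0) + (ε * (m * w 0^(m-1) * w' 0 * p 0 + w 0^m * p' 0)
      + B/2 * q' 0) = 0 ∧
    a2 / a 0 - (a' 0 / a 0)^2 + β * (w2 / w 0) - β * (w' 0 / w 0)^2
      + (ε * (w 0^m * p2 + 2 * m * w 0^(m-1) * w' 0 * p' 0 + m * w 0^(m-1) * w2 * p 0)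
      + B/2 * q2) ≤ 0 := by
  have hane : ∀ᶠ t in nhds (0:ℝ), a t ≠ 0 :=
    ha.self_of_nhds.continuousAt.eventually_ne ha0.ne'
  have hwne : ∀ᶠ t in nhds (0:ℝ), w t ≠ 0 :=
    hw.self_of_nhds.continuousAt.eventually_ne hw0.ne'
  have h1 : ∀ᶠ t in nhds (0:ℝ), HasDerivAt (fun t => Real.log (a t) + β * Real.log (w t)
      + (ε * (w t ^ m * p t) + B/2 * q t))
      (a' t / a t + β * (w' t / w t) + (ε * (m * w t^(m-1) * w' t * p t + w t^m * p' t)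
      + B/2 * q' t)) t := by
    filter_upwards [ha, hw, hp, hq, hane, hwne] with t ha hw hp hq hane hwne
    exact ((ha.log hane).fun_add ((hw.log hwne).const_mul β)).fun_add
      ((((hw.fun_pow m).fun_mul hp).const_mul ε).fun_add (hq.const_mul (B/2)))
  have ha0' := ha.self_of_nhds
  have hw0' := hw.self_of_nhds
  have hp0' := hp.self_of_nhds
  have h2 := ((ha2.fun_div ha0' ha0.ne').fun_add ((hw2.fun_div hw0' hw0.ne').const_mul β)).fun_add
    (((((((hw0'.fun_pow (m-1)).const_mul (m:ℝ)).fun_mul hw2).fun_mul hp0').fun_add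
      ((hw0'.fun_pow m).fun_mul hp2)).const_mul ε).fun_add (hq2.const_mul (B/2)))
  obtain ⟨r1, r2⟩ := isLocalMax_second h1 h2 hmax
  refine ⟨r1, ?_⟩
  have hpos : 0 ≤ ε * (m * (((m-1:ℕ):ℝ) * w 0^(m-1-1) * w' 0) * w' 0 * p 0) := by
    have : (m:ℝ) * (((m-1:ℕ):ℝ) * w 0^(m-1-1) * w' 0) * w' 0 * p 0
      = (m:ℝ) * ((m-1:ℕ):ℝ) * w 0^(m-1-1) * (w' 0)^2 * p 0 := by ring
    rw [this]; positivity
  have e1 : (a2 * a 0 - a' 0 * a' 0) / a 0 ^ 2 = a2 / a 0 - (a' 0 / a 0)^2 := by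
    field_simp
  have e2 : (w2 * w 0 - w' 0 * w' 0) / w 0 ^ 2 = w2 / w 0 - (w' 0 / w 0)^2 := by
    field_simp
  rw [e1, e2] at r2
  linarith

variable {n : ℕ} {E : Type*} [NormedAddCommGroup E] [InnerProductSpace ℝ E]

set_option maxHeartbeats 1000000 in
theorem line_second {Ω : Set E} (hΩ : IsOpen Ω) {u : E → ℝ} {D1 : E → (E →L[ℝ] ℝ)}
    {D2 : E → (E →L[ℝ] E →L[ℝ] ℝ)} {D3 : E → (E →L[ℝ] E →L[ℝ] E →L[ℝ] ℝ)}
    (hD1 : ∀ y ∈ Ω, HasFDerivAt u (D1 y) y)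
    (hD2 : ∀ y ∈ Ω, HasFDerivAt D1 (D2 y) y)
    (hD3 : ∀ y ∈ Ω, HasFDerivAt D2 (D3 y) y) {x : E} (hx : x ∈ Ω)
    {D4 : E →L[ℝ] E →L[ℝ] E →L[ℝ] E →L[ℝ] ℝ} (hD4 : HasFDerivAt D3 D4 x)
    {b : OrthonormalBasis (Fin n) ℝ E} {lam : Fin n → ℝ}
    (hb : ∀ i j, D2 x (b i) (b j) = if i = j then lam i else 0) (i1 : Fin n)
    (hl1 : 0 < lam i1) {δ β ε B w p : ℝ} {m : ℕ} {x1 : E} (hm : 2 ≤ m) (hε : 0 ≤ ε)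
    (hwd : w = - u x - δ) (hw : 0 < w) (hp : p = ∑ k, (D1 x (b k))^2)
    (hmax : IsLocalMax (fun y => Real.log (D2 y (b i1) (b i1)) + β * Real.log (- u y - δ)
      + (ε * ((- u y - δ)^m * ∑ k, (D1 y (b k))^2) + B/2 * ‖y - x1‖^2)) x) (i : Fin n) :
    D3 x (b i) (b i1) (b i1) / lam i1 = β * D1 x (b i) / w -
      (ε * (2 * D1 x (b i) * lam i * w^m - m * w^(m-1) * D1 x (b i) * p)
        + B * inner ℝ (x - x1) (b i)) ∧
    D4 (b i) (b i) (b i1) (b i1) / lam i1 - (D3 x (b i) (b i1) (b i1) / lam i1)^2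
      - β * lam i / w - β * (D1 x (b i))^2 / w^2
      + ε * (w^m * (2 * (lam i)^2 + 2 * ∑ k, D1 x (b k) * D3 x (b i) (b i) (b k))
        - 4 * m * w^(m-1) * (D1 x (b i))^2 * lam i - m * w^(m-1) * lam i * p) + B ≤ 0 := by
  set v := b i with hv
  set c : ℝ → E := fun t => x + t • v with hc
  have hc0 : c 0 = x := by simp [hc]
  have hcd : ∀ t, HasDerivAt c v t := by
    intro t
    have h := ((hasDerivAt_id t).smul_const v).const_add x
    rw [one_smul] at h
    exact h
  have hcΩ : ∀ᶠ t in nhds (0:ℝ), c t ∈ Ω :=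
    (hcd 0).continuousAt.eventually (hΩ.mem_nhds (by rw [hc0]; exact hx))
  have d1 : ∀ t, c t ∈ Ω → HasDerivAt (fun t => u (c t)) (D1 (c t) v) t := fun t ht =>
    (hD1 _ ht).comp_hasDerivAt t (hcd t)
  have d2 : ∀ t, c t ∈ Ω → ∀ z, HasDerivAt (fun t => D1 (c t) z) (D2 (c t) v z) t := by
    intro t ht z
    have h : HasDerivAt (fun t => D1 (c t)) (D2 (c t) v) t :=
      (hD2 _ ht).comp_hasDerivAt t (hcd t)
    simpa using h.clm_apply (hasDerivAt_const t z)
  have d3 : ∀ t, c t ∈ Ω → ∀ z z', HasDerivAt (fun t => D2 (c t) z z') (D3 (c t) v z z') t := by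
    intro t ht z z'
    have h : HasDerivAt (fun t => D2 (c t)) (D3 (c t) v) t :=
      (hD3 _ ht).comp_hasDerivAt t (hcd t)
    simpa using (h.clm_apply (hasDerivAt_const t z)).clm_apply (hasDerivAt_const t z')
  have d4 : ∀ y z z', HasDerivAt (fun t => D3 (c t) y z z') (D4 v y z z') 0 := by
    intro y z z'
    have h4 : HasFDerivAt D3 D4 (c 0) := by rw [hc0]; exact hD4
    have h : HasDerivAt (fun t => D3 (c t)) (D4 v) 0 := h4.comp_hasDerivAt 0 (hcd 0)
    simpa using ((h.clm_apply (hasDerivAt_const 0 y)).clm_apply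
      (hasDerivAt_const 0 z)).clm_apply (hasDerivAt_const 0 z')
  have hc0Ω : c 0 ∈ Ω := by rw [hc0]; exact hx
  have dq : ∀ t, HasDerivAt (fun t => ‖c t - x1‖^2) (2 * inner ℝ (c t - x1) v) t := fun t =>
    ((hcd t).sub_const x1).norm_sq
  have dq2 : HasDerivAt (fun t => 2 * inner ℝ (c t - x1) v) (2 * inner ℝ v v) 0 := by
    have := (((hcd 0).sub_const x1).inner ℝ (hasDerivAt_const 0 v)).const_mul 2
    simpa using this
  have dw2 : HasDerivAt (fun t => - (D1 (c t) v)) (- D2 (c 0) v v) 0 := (d2 0 hc0Ω v).fun_neg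
  have dp2 := HasDerivAt.fun_sum (u := Finset.univ) (x := (0:ℝ)) fun k (_ : k ∈ Finset.univ) =>
    ((d2 0 hc0Ω (b k)).const_mul 2).fun_mul (d3 0 hc0Ω v (b k))
  have hm' : IsLocalMax (fun t => Real.log (D2 (c t) (b i1) (b i1)) + β * Real.log (- u (c t) - δ)
      + (ε * ((- u (c t) - δ)^m * ∑ k, (D1 (c t) (b k))^2) + B/2 * ‖c t - x1‖^2)) 0 := by
    have hcc : Filter.Tendsto c (nhds 0) (nhds x) := by
      have := (hcd 0).continuousAt.tendsto
      rwa [hc0] at this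
    have := hcc.eventually hmax
    filter_upwards [this] with t ht
    rw [hc0]; exact ht
  have key := one_dim (a := fun t => D2 (c t) (b i1) (b i1)) (w := fun t => - u (c t) - δ)
    (p := fun t => ∑ k, (D1 (c t) (b k))^2) (q := fun t => ‖c t - x1‖^2)
    (a' := fun t => D3 (c t) v (b i1) (b i1)) (w' := fun t => - (D1 (c t) v))
    (p' := fun t => ∑ k, 2 * D1 (c t) (b k) * D2 (c t) v (b k))
    (q' := fun t => 2 * inner ℝ (c t - x1) v) hm
    (hcΩ.mono fun t ht => d3 t ht _ _) (d4 _ _ _)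
    (hcΩ.mono fun t ht => (d1 t ht).fun_neg.sub_const δ) dw2
    (hcΩ.mono fun t ht => by
      refine HasDerivAt.fun_sum fun k _ => ?_
      have := (d2 t ht (b k)).fun_pow 2
      simpa using this) dp2
    (Filter.Eventually.of_forall dq) dq2
    (by simp only [hc0, hb]; simpa using hl1) (by simp only [hc0]; rw [← hwd]; exact hw)
    (by positivity) hε hm'
  simp only [hc0, hb, if_true, ← hwd, ← hp, hv] at key
  have hvv : inner ℝ (b i) (b i) = (1:ℝ) := by simp
  have e1 : ∑ k, 2 * D1 x (b k) * (if i = k then lam i else 0) = 2 * D1 x (b i) * lam i := by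
    simp
  have e2 : ∑ k, (2 * (if i = k then lam i else 0) * (if i = k then lam i else 0)
      + 2 * D1 x (b k) * D3 x (b i) (b i) (b k)) = 2 * (lam i)^2 +
        2 * ∑ k, D1 x (b k) * D3 x (b i) (b i) (b k) := by
    rw [Finset.sum_add_distrib, Finset.mul_sum]
    congr 1
    · simp [sq, mul_assoc]
    · refine Finset.sum_congr rfl fun k _ => by ring
  rw [e1, e2, hvv] at key
  obtain ⟨k1, k2⟩ := key
  constructor
  · rw [neg_div] at k1
    rw [mul_div_assoc]
    linarith
  · rw [neg_div, neg_div, neg_sq, div_pow (D1 x (b i))] at k2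
    rw [mul_div_assoc, mul_div_assoc]
    linarith

end calc4

section pt
variable {n : ℕ}

theorem grad_sq (u : EuclideanSpace ℝ (Fin n) → ℝ) (y : EuclideanSpace ℝ (Fin n))
    (b : OrthonormalBasis (Fin n) ℝ (EuclideanSpace ℝ (Fin n))) :
    ∑ k, (fderiv ℝ u y (b k))^2 = ‖gradient u y‖^2 := by
  rw [← b.sum_sq_norm_inner_left (gradient u y)]
  refine Finset.sum_congr rfl fun k _ => ?_
  rw [gradient, InnerProductSpace.toDual_symm_apply, Real.norm_eq_abs, sq_abs]

set_option maxSynthPendingDepth 5 in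
set_option maxHeartbeats 1000000 in
theorem point_est {Γ : Set (Fin n → ℝ)} {f : (Fin n → ℝ) → ℝ}
    (hΓ : IsConvexInvariantCone Γ) (hf : IsConcaveEllipticHessianOp Γ f) {N1 N2 : ℝ}
    (hN : ConditionN Γ f N1 N2) (hN1 : 0 < N1) {k : ℕ} (hk : N2 ≤ k)
    {Ω : Set (EuclideanSpace ℝ (Fin n))} {u : EuclideanSpace ℝ (Fin n) → ℝ}
    (hΩ : IsOpen Ω) (hu : ContDiffOn ℝ (⊤ : ℕ∞) u Ω)
    (hadm : ∀ x ∈ Ω, hessEigen u x ∈ Γ) (hsol : ∀ x ∈ Ω, f (hessEigen u x) = 1)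
    {x x1 : EuclideanSpace ℝ (Fin n)} (hx : x ∈ Ω)
    {b : OrthonormalBasis (Fin n) ℝ (EuclideanSpace ℝ (Fin n))}
    (hb : ∀ i j, fderiv ℝ (fderiv ℝ u) x (b i) (b j) = if i = j then hessEigen u x i else 0)
    {i1 : Fin n} (hl1 : 0 < hessEigen u x i1)
    {w M K ε B β C3 C4 K1 d δ D : ℝ} {a m : ℕ} (hm : m = 4*a+2)
    (hwd : w = - u x - δ)
    (hw : 0 < w) (hwM : w ≤ M) (hM : 1 ≤ M) (hK : 0 < K)
    (hK1 : K1 = M^(2*a+2)*K^2) (hε : ε = 1/(96*K1)) (hB : B = 4*ε*m^2*K^4+2)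
    (hC3 : C3 = 3*ε^2*m^2*(K^6*M^(2*a+2)) + 3*B^2*d^2)
    (hβ6 : 6 ≤ β) (hβC : 2*C3 ≤ β) (hC4 : C4 = 3*β^2*K^2 + 2*C3*M^(2*a+2))
    (hD : D = (β + ε*m*K1)*M)
    (hgrad : w^a * ‖gradient u x‖ ≤ K) (hxd : ‖x - x1‖ ≤ d)
    (hmax : IsLocalMax (fun y => Real.log (fderiv ℝ (fderiv ℝ u) y (b i1) (b i1))
      + β * Real.log (- u y - δ)
      + (ε * ((- u y - δ)^m * ‖gradient u y‖^2) + B/2 * ‖y - x1‖^2)) x) :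
    w^(m+(2*a+2))*(hessEigen u x i1)^2 ≤ (64+48*n)*C4/ε ∨
      w^(m+k+1)*(hessEigen u x i1)^2 ≤ 8*N1*D^(k+1)/ε := by
  have huA : ∀ y ∈ Ω, ∀ j : ℕ, ContDiffAt ℝ j u y := fun y hy j =>
    (hu.contDiffAt (hΩ.mem_nhds hy)).of_le (by exact_mod_cast le_top)
  have c1 : ∀ y ∈ Ω, ∀ j : ℕ, ContDiffAt ℝ j (fderiv ℝ u) y := fun y hy j =>
    (huA y hy (j+1)).fderiv_right (by norm_cast)
  have c2 : ∀ y ∈ Ω, ∀ j : ℕ, ContDiffAt ℝ j (fderiv ℝ (fderiv ℝ u)) y := fun y hy j =>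
    (c1 y hy (j+1)).fderiv_right (by norm_cast)
  have c3 : ∀ y ∈ Ω, ∀ j : ℕ, ContDiffAt ℝ j (fderiv ℝ (fderiv ℝ (fderiv ℝ u))) y :=
    fun y hy j => (c2 y hy (j+1)).fderiv_right (by norm_cast)
  have h1 : ∀ y ∈ Ω, HasFDerivAt u (fderiv ℝ u y) y := fun y hy =>
    ((huA y hy 1).differentiableAt (by norm_num)).hasFDerivAt
  have h2 : ∀ y ∈ Ω, HasFDerivAt (fderiv ℝ u) (fderiv ℝ (fderiv ℝ u) y) y := fun y hy =>
    ((c1 y hy 1).differentiableAt (by norm_num)).hasFDerivAt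
  have h3 : ∀ y ∈ Ω, HasFDerivAt (fderiv ℝ (fderiv ℝ u)) (fderiv ℝ (fderiv ℝ (fderiv ℝ u)) y) y :=
    fun y hy => ((c2 y hy 1).differentiableAt (by norm_num)).hasFDerivAt
  have h4 := ((c3 x hx 1).differentiableAt (by norm_num)).hasFDerivAt
  have hfd := hf.2.2.2.1 _ (hadm x hx)
  have heul : ∑ i, fpd f i (hessEigen u x) * hessEigen u x i = 1 := by
    rw [euler_f hΓ hf (hadm x hx), hsol x hx]
  obtain ⟨g, hg⟩ : ∃ g : Fin n → ℝ, g = fun i => fpd f i (hessEigen u x) := ⟨_, rfl⟩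
  have hgpos : ∀ i, 0 < g i := by rw [hg]; exact hfd
  have heul' : ∑ i, g i * hessEigen u x i = 1 := by rw [hg]; exact heul
  have hgmin : ∀ y ∈ Ω, ∀ e : OrthonormalBasis (Fin n) ℝ (EuclideanSpace ℝ (Fin n)),
      ∑ i, g i * fderiv ℝ (fderiv ℝ u) x (b i) (b i)
        ≤ ∑ i, g i * fderiv ℝ (fderiv ℝ u) y (e i) (e i) := by
    intro y hy e
    have := schur_D2 hΓ hf (huA y hy 2) (hadm y hy) (hsol y hy) (hadm x hx) e
    simp only [hb, if_true]
    rw [heul', hg]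
    exact this
  obtain ⟨lam, hlam⟩ : ∃ lam, lam = hessEigen u x := ⟨_, rfl⟩
  rw [← hlam] at hb hl1 heul' ⊢
  have hε0 : 0 < ε := by rw [hε, hK1]; positivity
  have hsy := D3_symm (huA x hx 4)
  have hth := third_final g lam hΩ h3 hx h4 hgmin hb i1
    (fun j => fderiv ℝ (fderiv ℝ (fderiv ℝ u)) x (b j) (b i1) (b i1))
    (fun j => by rw [(hsy (b i1) (b i1) (b j)).2, (hsy (b i1) (b j) (b i1)).1])
    (fun j => by rw [(hsy (b i1) (b j) (b i1)).1]) hgpos hl1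
  have hz := third_zero g hΩ h3 hx h4 hgmin
  have hmax' : IsLocalMax (fun y => Real.log (fderiv ℝ (fderiv ℝ u) y (b i1) (b i1))
      + β * Real.log (- u y - δ)
      + (ε * ((- u y - δ)^m * ∑ k, (fderiv ℝ u y (b k))^2) + B/2 * ‖y - x1‖^2)) x := by
    simp only [grad_sq]; exact hmax
  obtain ⟨p, hp⟩ : ∃ p, p = ∑ k, (fderiv ℝ u x (b k))^2 := ⟨_, rfl⟩
  have hline := line_second hΩ h1 h2 h3 hx h4 hb i1 hl1 (by omega) hε0.le hwd hw hp hmax'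
  refine core_sum i1 g lam (fun i => fderiv ℝ u x (b i))
    (fun i => fderiv ℝ (fderiv ℝ (fderiv ℝ u)) x (b i) (b i1) (b i1) / lam i1)
    (fun i => inner ℝ (x - x1) (b i))
    ((∑ i, g i * fderiv ℝ (fderiv ℝ (fderiv ℝ (fderiv ℝ u))) x (b i1) (b i1) (b i) (b i)) / lam i1)
    N1 D k w M K ε B β C3 C4 K1 d p a m hm hw hwM hM hK hK1 hε hB hC3 hβ6 hβC hC4 hD hN1
    ?_ ?_ ?_ (fun i => (hline i).1) hgpos hl1 hth ?_ ?_
  · rw [hp, grad_sq, mul_comm 2 a, pow_mul, ← mul_pow]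
    exact pow_le_pow_left₀ (by positivity) hgrad 2
  · intro i
    rw [hp]
    exact Finset.single_le_sum (f := fun k => (fderiv ℝ u x (b k))^2)
      (fun k _ => sq_nonneg _) (Finset.mem_univ i)
  · intro i
    have hi : |inner ℝ (x - x1) (b i)| ≤ ‖x - x1‖ := by
      have := abs_real_inner_le_norm (x - x1) (b i)
      simpa using this
    rw [← sq_abs]
    exact pow_le_pow_left₀ (abs_nonneg _) (hi.trans hxd) 2
  · have hs : ∑ i, g i * (fderiv ℝ (fderiv ℝ (fderiv ℝ (fderiv ℝ u))) x (b i) (b i) (b i1) (b i1) / lam i1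
      - (fderiv ℝ (fderiv ℝ (fderiv ℝ u)) x (b i) (b i1) (b i1) / lam i1)^2
      - β * lam i / w - β * (fderiv ℝ u x (b i))^2 / w^2
      + ε * (w^m * (2 * (lam i)^2 + 2 * ∑ k, fderiv ℝ u x (b k) *
          fderiv ℝ (fderiv ℝ (fderiv ℝ u)) x (b i) (b i) (b k))
        - 4 * m * w^(m-1) * (fderiv ℝ u x (b i))^2 * lam i - m * w^(m-1) * lam i * p) + B) ≤ 0 :=
      Finset.sum_nonpos fun i _ => mul_nonpos_of_nonneg_of_nonpos (hgpos i).le (hline i).2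
    refine le_trans (le_of_eq ?_) hs
    have hzz : ∑ i, g i * ∑ k, fderiv ℝ u x (b k) *
          fderiv ℝ (fderiv ℝ (fderiv ℝ u)) x (b i) (b i) (b k) = 0 := by
      simp only [Finset.mul_sum]
      rw [Finset.sum_comm]
      refine Finset.sum_eq_zero fun k _ => ?_
      have := hz (b k)
      rw [show (0:ℝ) = fderiv ℝ u x (b k) * 0 by ring, ← this, Finset.mul_sum]
      refine Finset.sum_congr rfl fun i _ => ?_
      rw [(hsy (b i) (b i) (b k)).2, (hsy (b i) (b k) (b i)).1]
      ring
    have hsplit : ∀ i, g i * (fderiv ℝ (fderiv ℝ (fderiv ℝ (fderiv ℝ u))) x (b i) (b i) (b i1) (b i1) / lam i1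
      - (fderiv ℝ (fderiv ℝ (fderiv ℝ u)) x (b i) (b i1) (b i1) / lam i1)^2
      - β * lam i / w - β * (fderiv ℝ u x (b i))^2 / w^2
      + ε * (w^m * (2 * (lam i)^2 + 2 * ∑ k, fderiv ℝ u x (b k) *
          fderiv ℝ (fderiv ℝ (fderiv ℝ u)) x (b i) (b i) (b k))
        - 4 * m * w^(m-1) * (fderiv ℝ u x (b i))^2 * lam i - m * w^(m-1) * lam i * p) + B) =
      g i * fderiv ℝ (fderiv ℝ (fderiv ℝ (fderiv ℝ u))) x (b i1) (b i1) (b i) (b i) / lam i1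
      + g i * (- (fderiv ℝ (fderiv ℝ (fderiv ℝ u)) x (b i) (b i1) (b i1) / lam i1)^2
        - β * (fderiv ℝ u x (b i))^2 / w^2
        + ε * (2 * w^m * (lam i)^2 - 4 * m * w^(m-1) * (fderiv ℝ u x (b i))^2 * lam i) + B)
      - (g i * lam i) * (β / w + ε * m * (w^(m-1) * p))
      + (g i * ∑ k, fderiv ℝ u x (b k) *
          fderiv ℝ (fderiv ℝ (fderiv ℝ u)) x (b i) (b i) (b k)) * (2 * ε * w^m) := by
      intro i
      rw [D4_symm (huA x hx 5) (b i) (b i1)]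
      ring
    rw [Finset.sum_congr rfl fun i _ => hsplit i, Finset.sum_add_distrib, Finset.sum_sub_distrib,
      Finset.sum_add_distrib, ← Finset.sum_mul, ← Finset.sum_mul, hzz, heul', ← Finset.sum_div]
    ring
  · intro C hC hsum
    have hC0 : 0 < C := by linarith
    have := hN lam (hlam ▸ hadm x hx) (hlam ▸ hsol x hx) C hC0
      (by rw [hg, ← hlam] at hsum; exact hsum) i1
    have hgi : g i1 = fpd f i1 lam := by rw [hg, hlam]
    rw [hgi]
    refine le_trans ?_ this
    have hpw : C ^ N2 ≤ C ^ k := by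
      rw [← Real.rpow_natCast]
      exact Real.rpow_le_rpow_of_exponent_le hC hk
    have : 0 < C ^ N2 := Real.rpow_pos_of_pos hC0 _
    gcongr
end pt

section glob
variable {n : ℕ}

theorem abs_eig {l : Fin n → ℝ} {Λ : ℝ} (hΛ : 0 ≤ Λ) (h : ∀ i, l i ≤ Λ) (hs : 0 < ∑ i, l i)
    (i : Fin n) : |l i| ≤ n * Λ := by
  have hn : (1:ℝ) ≤ n := by
    have : 0 < n := i.pos
    exact_mod_cast this
  rw [abs_le]
  constructor
  · have h1 : ∑ j ∈ Finset.univ.erase i, l j ≤ ∑ j ∈ Finset.univ.erase i, Λ :=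
      Finset.sum_le_sum fun j _ => h j
    have h2 := Finset.add_sum_erase Finset.univ l (Finset.mem_univ i)
    have h3 := Finset.add_sum_erase Finset.univ (fun _ : Fin n => Λ) (Finset.mem_univ i)
    simp only [Finset.sum_const, Finset.card_univ, Fintype.card_fin, nsmul_eq_mul] at h1 h3
    linarith
  · nlinarith [h i]

theorem norm_bd {u : EuclideanSpace ℝ (Fin n) → ℝ} {x : EuclideanSpace ℝ (Fin n)}
    (hu : ContDiffAt ℝ 2 u x) (hs : 0 < ∑ i, hessEigen u x i) {Λ : ℝ} (hΛ : 0 ≤ Λ)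
    (h : ∀ e : EuclideanSpace ℝ (Fin n), ‖e‖ = 1 → fderiv ℝ (fderiv ℝ u) x e e ≤ Λ) :
    ‖iteratedFDeriv ℝ 2 u x‖ ≤ n * Λ := by
  obtain ⟨b, hb⟩ := spec_basis hu
  have hl : ∀ i, hessEigen u x i ≤ Λ := by
    intro i
    have := h (b i) (by simp)
    rw [hb] at this
    simpa using this
  have habs := abs_eig hΛ hl hs
  refine ContinuousMultilinearMap.opNorm_le_bound (by positivity) fun v => ?_
  rw [iteratedFDeriv_two_apply, diag_form hb, Fin.prod_univ_two]
  rw [Real.norm_eq_abs]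
  refine (Finset.abs_sum_le_sum_abs _ _).trans ?_
  have h1 : ∀ i, |hessEigen u x i * (inner ℝ (b i) (v 0) * inner ℝ (b i) (v 1))|
      ≤ (n * Λ) * (‖(inner ℝ (b i) (v 0) : ℝ)‖ * ‖(inner ℝ (b i) (v 1) : ℝ)‖) := by
    intro i
    rw [abs_mul, abs_mul, Real.norm_eq_abs, Real.norm_eq_abs]
    exact mul_le_mul_of_nonneg_right (habs i) (by positivity)
  refine (Finset.sum_le_sum fun i _ => h1 i).trans ?_
  rw [← Finset.mul_sum]
  refine mul_le_mul_of_nonneg_left ?_ (by positivity)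
  refine (Real.sum_mul_le_sqrt_mul_sqrt _ _ _).trans ?_
  rw [b.sum_sq_norm_inner_right, b.sum_sq_norm_inner_right, Real.sqrt_sq (norm_nonneg _),
    Real.sqrt_sq (norm_nonneg _)]

theorem weak_max {Γ : Set (Fin n → ℝ)} (hn : 0 < n) (hΓ : IsConvexInvariantCone Γ)
    {Ω : Set (EuclideanSpace ℝ (Fin n))} {u : EuclideanSpace ℝ (Fin n) → ℝ}
    (hΩ : IsOpen Ω) (hbd : Bornology.IsBounded Ω) (hu : ∀ y ∈ Ω, ContDiffAt ℝ 2 u y)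
    (hc : ContinuousOn u (closure Ω))
    (hadm : ∀ x ∈ Ω, hessEigen u x ∈ Γ) (hfr : ∀ x ∈ frontier Ω, u x = 0) :
    ∀ x ∈ Ω, u x ≤ 0 := by
  intro y hy
  by_contra hpos
  push Not at hpos
  obtain ⟨x, hx, hmax⟩ := hbd.isCompact_closure.exists_isMaxOn ⟨y, subset_closure hy⟩ hc
  have hux : 0 < u x := hpos.trans_le (hmax (subset_closure hy))
  have hxΩ : x ∈ Ω := by
    by_contra hxn
    have : x ∈ frontier Ω := by rw [hΩ.frontier_eq]; exact ⟨hx, hxn⟩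
    rw [hfr x this] at hux
    exact lt_irrefl _ hux
  obtain ⟨b, hb⟩ := spec_basis (hu x hxΩ)
  have hle : ∀ i, hessEigen u x i ≤ 0 := by
    intro i
    set c : ℝ → EuclideanSpace ℝ (Fin n) := fun t => x + t • b i with hc
    have hc0 : c 0 = x := by simp [hc]
    have hcd : ∀ t, HasDerivAt c (b i) t := by
      intro t
      have h := ((hasDerivAt_id t).smul_const (b i)).const_add x
      rw [one_smul] at h
      exact h
    have hcΩ : ∀ᶠ t in nhds (0:ℝ), c t ∈ Ω :=
      (hcd 0).continuousAt.eventually (hΩ.mem_nhds (by rw [hc0]; exact hxΩ))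
    have h1 : ∀ᶠ t in nhds (0:ℝ), HasDerivAt (fun t => u (c t)) (fderiv ℝ u (c t) (b i)) t := by
      filter_upwards [hcΩ] with t ht
      exact ((hu _ ht).differentiableAt (by norm_num)).hasFDerivAt.comp_hasDerivAt t (hcd t)
    have h2 : HasDerivAt (fun t => fderiv ℝ u (c t) (b i))
        (fderiv ℝ (fderiv ℝ u) x (b i) (b i)) 0 := by
      have hd : HasFDerivAt (fderiv ℝ u) (fderiv ℝ (fderiv ℝ u) x) (c 0) := by
        rw [hc0]
        have : ContDiffAt ℝ 1 (fderiv ℝ u) x := (hu x hxΩ).fderiv_right (by norm_num)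
        exact (this.differentiableAt (by norm_num)).hasFDerivAt
      have := (hd.comp_hasDerivAt 0 (hcd 0)).clm_apply (hasDerivAt_const 0 (b i))
      simpa using this
    have h3 : IsLocalMax (fun t => u (c t)) 0 := by
      filter_upwards [hcΩ] with t ht
      rw [hc0]
      exact hmax (subset_closure ht)
    have := (isLocalMax_second h1 h2 h3).2
    rw [hb] at this
    simpa using this
  have := cone_sum_pos hn hΓ (hadm x hxΩ)
  have h4 : ∑ i, hessEigen u x i ≤ 0 := Finset.sum_nonpos fun i _ => hle i
  linarith

set_option maxHeartbeats 1000000 in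
theorem max_est (hn : 0 < n) {Γ : Set (Fin n → ℝ)} {f : (Fin n → ℝ) → ℝ}
    (hΓ : IsConvexInvariantCone Γ) (hf : IsConcaveEllipticHessianOp Γ f) {N1 N2 : ℝ}
    (hN : ConditionN Γ f N1 N2) (hN1 : 0 < N1) {k : ℕ} (hk : N2 ≤ k)
    {Ω : Set (EuclideanSpace ℝ (Fin n))} {u : EuclideanSpace ℝ (Fin n) → ℝ}
    (hΩ : IsOpen Ω) (hbd : Bornology.IsBounded Ω) (hu : ContDiffOn ℝ (⊤ : ℕ∞) u Ω)
    (hc : ContinuousOn u (closure Ω))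
    (hadm : ∀ x ∈ Ω, hessEigen u x ∈ Γ) (hsol : ∀ x ∈ Ω, f (hessEigen u x) = 1)
    (hfr : ∀ x ∈ frontier Ω, u x = 0)
    {M K ε B C3 C4 K1 d δ D : ℝ} {a m β : ℕ} (hm : m = 4*a+2) (hδ : 0 < δ)
    (hdiam : Metric.diam Ω ≤ d) (huM : ∀ x ∈ Ω, - u x ≤ M)
    (hM : 1 ≤ M) (hK : 0 < K)
    (hK1 : K1 = M^(2*a+2)*K^2) (hε : ε = 1/(96*K1)) (hB : B = 4*ε*m^2*K^4+2)
    (hC3 : C3 = 3*ε^2*m^2*(K^6*M^(2*a+2)) + 3*B^2*d^2)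
    (hβ6 : 6 ≤ (β:ℝ)) (hβC : 2*C3 ≤ β) (hC4 : C4 = 3*(β:ℝ)^2*K^2 + 2*C3*M^(2*a+2))
    (hD : D = (β + ε*m*K1)*M)
    (hβ1 : m+(2*a+2) ≤ 2*β) (hβ2 : m+k+1 ≤ 2*β)
    (hgrad : ∀ x ∈ Ω, 0 < - u x → (- u x)^a * ‖gradient u x‖ ≤ K)
    {y e : EuclideanSpace ℝ (Fin n)} (hy : y ∈ Ω) (hyδ : 0 < - u y - δ) (he : ‖e‖ = 1) :
    (- u y - δ)^β * fderiv ℝ (fderiv ℝ u) y e e ≤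
      Real.sqrt (M^(2*β)*((64+48*n)*C4/ε + 8*N1*D^(k+1)/ε)) * Real.exp (ε*K1+B/2*d^2) := by
  have hK1p : 0 < K1 := by rw [hK1]; positivity
  have hε0 : 0 < ε := by rw [hε]; positivity
  have hB0 : 0 < B := by rw [hB]; positivity
  have hC30 : 0 ≤ C3 := by rw [hC3]; positivity
  have hC40 : 0 ≤ C4 := by rw [hC4]; positivity
  have hD0 : 0 ≤ D := by rw [hD]; positivity
  rcases le_or_gt (fderiv ℝ (fderiv ℝ u) y e e) 0 with hneg | hpos
  · refine le_trans (mul_nonpos_of_nonneg_of_nonpos (by positivity) hneg) (by positivity)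
  have huA : ∀ y ∈ Ω, ∀ j : ℕ, ContDiffAt ℝ j u y := fun y hy j =>
    (hu.contDiffAt (hΩ.mem_nhds hy)).of_le (by exact_mod_cast le_top)
  have c1 : ∀ y ∈ Ω, ∀ j : ℕ, ContDiffAt ℝ j (fderiv ℝ u) y := fun y hy j =>
    (huA y hy (j+1)).fderiv_right (by norm_cast)
  have c2 : ∀ y ∈ Ω, ∀ j : ℕ, ContDiffAt ℝ j (fderiv ℝ (fderiv ℝ u)) y := fun y hy j =>
    (c1 y hy (j+1)).fderiv_right (by norm_cast)
  have hgc : ∀ y ∈ Ω, ContinuousAt (gradient u) y := by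
    intro y hy
    exact (InnerProductSpace.toDual ℝ _).symm.continuous.continuousAt.comp (c1 y hy 0).continuousAt
  have huc : ∀ y ∈ Ω, ContinuousAt u y := fun y hy => (huA y hy 0).continuousAt
  have hDc : ∀ y ∈ Ω, ContinuousAt (fderiv ℝ (fderiv ℝ u)) y := fun y hy => (c2 y hy 0).continuousAt
  set h : EuclideanSpace ℝ (Fin n) → ℝ := fun z =>
    ε * ((- u z - δ)^m * ‖gradient u z‖^2) + B/2 * ‖z - y‖^2 with hh
  set S : Set (EuclideanSpace ℝ (Fin n)) := {z | z ∈ closure Ω ∧ u z ≤ -δ} with hS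
  have hSΩ : S ⊆ Ω := by
    rintro z ⟨hz, hzu⟩
    by_contra hzn
    have : z ∈ frontier Ω := by rw [hΩ.frontier_eq]; exact ⟨hz, hzn⟩
    rw [hfr z this] at hzu
    linarith
  have hScl : IsCompact S := by
    have hcl : IsClosed S := hc.preimage_isClosed_of_isClosed isClosed_closure isClosed_Iic
    exact hbd.isCompact_closure.of_isClosed_subset hcl fun z hz => hz.1
  set G : EuclideanSpace ℝ (Fin n) × EuclideanSpace ℝ (Fin n) → ℝ := fun z =>
    (- u z.1 - δ)^β * fderiv ℝ (fderiv ℝ u) z.1 z.2 z.2 * Real.exp (h z.1) with hG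
  have hGc : ContinuousOn G (S ×ˢ Metric.sphere 0 1) := by
    rintro ⟨z, e⟩ ⟨hz, -⟩
    refine ContinuousAt.continuousWithinAt ?_
    have hzΩ := hSΩ hz
    have t1 : ContinuousAt (fun z : EuclideanSpace ℝ (Fin n) × EuclideanSpace ℝ (Fin n) => u z.1)
      (z, e) := ContinuousAt.comp (f := Prod.fst) (huc z hzΩ) continuousAt_fst
    have t2 : ContinuousAt (fun z : EuclideanSpace ℝ (Fin n) × EuclideanSpace ℝ (Fin n) =>
      gradient u z.1) (z, e) := ContinuousAt.comp (f := Prod.fst) (g := gradient u) (hgc z hzΩ) continuousAt_fst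
    have t3 : ContinuousAt (fun z : EuclideanSpace ℝ (Fin n) × EuclideanSpace ℝ (Fin n) =>
      fderiv ℝ (fderiv ℝ u) z.1) (z, e) :=
      ContinuousAt.comp (f := Prod.fst) (hDc z hzΩ) continuousAt_fst
    simp only [hG, hh]
    fun_prop
  have hyS : y ∈ S := ⟨subset_closure hy, by linarith⟩
  obtain ⟨⟨x, e0⟩, ⟨hxS, he0⟩, hmax⟩ := (hScl.prod (isCompact_sphere 0 1)).exists_isMaxOn
    ⟨(y, e), hyS, by simpa using he⟩ hGc
  have hGy : 0 < G (y, e) := by simp only [hG]; positivity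
  have hGx : G (y, e) ≤ G (x, e0) := hmax ⟨hyS, by simpa using he⟩
  simp only at hxS he0
  have hx := hSΩ hxS
  have hw0 : 0 ≤ - u x - δ := by linarith [hxS.2]
  have hβ0 : β ≠ 0 := by rintro rfl; norm_num at hβ6
  have hw : 0 < - u x - δ := by
    rcases hw0.lt_or_eq with h | h
    · exact h
    · have : G (x, e0) = 0 := by simp only [hG, ← h, zero_pow hβ0, zero_mul]
      linarith
  have hDe0 : 0 < fderiv ℝ (fderiv ℝ u) x e0 e0 := by
    have h1 : 0 < G (x, e0) := hGy.trans_le hGx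
    by_contra hcon
    push Not at hcon
    have : G (x, e0) ≤ 0 := by
      simp only [hG]
      exact mul_nonpos_of_nonpos_of_nonneg
        (mul_nonpos_of_nonneg_of_nonpos (by positivity) hcon) (Real.exp_pos _).le
    linarith
  obtain ⟨b, hb⟩ := spec_basis (huA x hx 2)
  have : Nonempty (Fin n) := ⟨⟨0, hn⟩⟩
  obtain ⟨i1, hi1⟩ := Finite.exists_max (hessEigen u x)
  have hDl : fderiv ℝ (fderiv ℝ u) x e0 e0 ≤ hessEigen u x i1 := by
    rw [diag_form hb]
    have h1 : ∀ i, hessEigen u x i * (inner ℝ (b i) e0 * inner ℝ (b i) e0) ≤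
        hessEigen u x i1 * ‖(inner ℝ (b i) e0 : ℝ)‖^2 := by
      intro i
      rw [Real.norm_eq_abs, sq_abs, sq]
      exact mul_le_mul_of_nonneg_right (hi1 i) (mul_self_nonneg _)
    refine (Finset.sum_le_sum fun i _ => h1 i).trans (le_of_eq ?_)
    have : ‖e0‖ = 1 := by simpa using he0
    rw [← Finset.mul_sum, b.sum_sq_norm_inner_right, this]
    ring
  have hl1 : 0 < hessEigen u x i1 := hDe0.trans_le hDl
  have hDb : fderiv ℝ (fderiv ℝ u) x (b i1) (b i1) = hessEigen u x i1 := by rw [hb]; simp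
  have hGb : G (x, e0) ≤ G (x, b i1) := by
    simp only [hG]
    rw [hDb]
    gcongr
  have hloc : IsLocalMax (fun z => Real.log (fderiv ℝ (fderiv ℝ u) z (b i1) (b i1))
      + β * Real.log (- u z - δ)
      + (ε * ((- u z - δ)^m * ‖gradient u z‖^2) + B/2 * ‖z - y‖^2)) x := by
    have n1 : ∀ᶠ z in nhds x, z ∈ Ω := hΩ.mem_nhds hx
    have n2 : ∀ᶠ z in nhds x, 0 < - u z - δ := by
      have : ContinuousAt (fun z => - u z - δ) x := ((huc x hx).neg).sub continuousAt_const
      exact this.eventually_const_lt hw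
    have n3 : ∀ᶠ z in nhds x, 0 < fderiv ℝ (fderiv ℝ u) z (b i1) (b i1) := by
      have : ContinuousAt (fun z => fderiv ℝ (fderiv ℝ u) z (b i1) (b i1)) x :=
        ((hDc x hx).clm_apply continuousAt_const).clm_apply continuousAt_const
      exact this.eventually_const_lt (show 0 < fderiv ℝ (fderiv ℝ u) x (b i1) (b i1) by rw [hDb]; exact hl1)
    have hlog : ∀ z, 0 < - u z - δ → 0 < fderiv ℝ (fderiv ℝ u) z (b i1) (b i1) →
        Real.log (fderiv ℝ (fderiv ℝ u) z (b i1) (b i1))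
      + β * Real.log (- u z - δ)
      + (ε * ((- u z - δ)^m * ‖gradient u z‖^2) + B/2 * ‖z - y‖^2) = Real.log (G (z, b i1)) := by
      intro z z1 z2
      simp only [hG]
      rw [Real.log_mul (by positivity) (Real.exp_pos _).ne', Real.log_mul (by positivity) z2.ne',
        Real.log_exp, Real.log_pow, hh]
      ring
    filter_upwards [n1, n2, n3] with z z1 z2 z3
    rw [hlog z z2 z3, hlog x hw (by rw [hDb]; exact hl1)]
    apply Real.log_le_log
    · simp only [hG]; positivity
    · refine le_trans (hmax ⟨⟨subset_closure z1, by linarith⟩, ?_⟩) hGb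
      simp
  have hwM : - u x - δ ≤ M := by linarith [huM x hx]
  have hgr : (- u x - δ)^a * ‖gradient u x‖ ≤ K := by
    refine le_trans ?_ (hgrad x hx (by linarith))
    gcongr
    linarith
  have hxd : ‖x - y‖ ≤ d := by
    rw [← dist_eq_norm]
    exact (Metric.dist_le_diam_of_mem hbd hx hy).trans hdiam
  have hpe := point_est hΓ hf hN hN1 hk hΩ hu hadm hsol hx hb hl1 hm rfl hw hwM hM hK hK1 hε hB hC3
    hβ6 hβC hC4 hD hgr hxd hloc
  set w := - u x - δ with hwdef
  set l := hessEigen u x i1 with hl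
  have hQ1 : 0 ≤ (64+48*n)*C4/ε := by positivity
  have hQ2 : 0 ≤ 8*N1*D^(k+1)/ε := by positivity
  have hpow : ∀ s Q, s ≤ 2*β → w^s*l^2 ≤ Q → 0 ≤ Q → (w^β*l)^2 ≤ M^(2*β)*Q := by
    intro s Q hs hq hQ0
    have e1 : (w^β*l)^2 = w^(2*β-s) * (w^s*l^2) := by
      rw [mul_pow, ← pow_mul, ← mul_assoc, ← pow_add]
      congr 2; omega
    rw [e1]
    have e2 : w^(2*β-s) ≤ M^(2*β-s) := pow_le_pow_left₀ hw.le hwM _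
    have e3 : M^(2*β-s) ≤ M^(2*β) := pow_le_pow_right₀ hM (by omega)
    exact mul_le_mul (e2.trans e3) hq (by positivity) (by positivity)
  have hR : (w^β*l)^2 ≤ M^(2*β)*((64+48*n)*C4/ε + 8*N1*D^(k+1)/ε) := by
    have hMp : 0 ≤ M^(2*β) := by positivity
    rcases hpe with h1 | h1
    · refine (hpow _ _ hβ1 h1 hQ1).trans ?_
      exact mul_le_mul_of_nonneg_left (by linarith) hMp
    · refine (hpow _ _ hβ2 h1 hQ2).trans ?_
      exact mul_le_mul_of_nonneg_left (by linarith) hMp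
  have hwl : w^β*l ≤ Real.sqrt (M^(2*β)*((64+48*n)*C4/ε + 8*N1*D^(k+1)/ε)) :=
    Real.le_sqrt_of_sq_le hR
  have hhx : h x ≤ ε*K1+B/2*d^2 := by
    simp only [hh]
    have q1 : w^m * ‖gradient u x‖^2 ≤ K1 := by
      have e1 : w^m * ‖gradient u x‖^2 = w^(2*a+2) * (w^a * ‖gradient u x‖)^2 := by
        rw [mul_pow, ← pow_mul, ← mul_assoc, ← pow_add, hm]
        congr 2; omega
      rw [e1, hK1]
      gcongr
    gcongr
  have hhy : 0 ≤ h y := by simp only [hh]; positivity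
  calc (- u y - δ)^β * fderiv ℝ (fderiv ℝ u) y e e
      ≤ (- u y - δ)^β * fderiv ℝ (fderiv ℝ u) y e e * Real.exp (h y) :=
        le_mul_of_one_le_right (by positivity) (Real.one_le_exp hhy)
    _ ≤ G (x, b i1) := hGx.trans hGb
    _ = w^β * l * Real.exp (h x) := by simp only [hG, hDb]; rfl
    _ ≤ _ := by gcongr

end glob

/-- **Proposition (`C²` estimate).** For a concave elliptic Hessian operator satisfying
condition N with constants `N₁, N₂` and a solution `u` of `F(D²u) = 1` in `Ω`, `u = 0` on
`∂Ω`, satisfying the interior gradient bound `sup_Ω ((−u)^α |Du|) ≤ K`, one has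
`sup_Ω ((−u)^β |D²u|) ≤ C` with `β, C` depending only on `‖u‖_{C⁰(Ω)}`, `K`, `α`,
`N₁, N₂` and `diam(Ω)` — no condition D is needed. -/
theorem c2_estimate (n : ℕ) (hn : 2 ≤ n)
    (N₁ N₂ : ℝ) (hN₁ : 0 < N₁) (hN₂ : 0 < N₂)
    (M : ℝ) (hM : 0 < M) (K : ℝ) (hK : 0 < K) (α : ℝ) (hα : 0 < α)
    (d : ℝ) (hd : 0 < d) :
    ∃ β C : ℝ, 0 < β ∧ 0 < C ∧
      ∀ (Γ : Set (Fin n → ℝ)) (f : (Fin n → ℝ) → ℝ),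
        IsConvexInvariantCone Γ → IsConcaveEllipticHessianOp Γ f → ConditionN Γ f N₁ N₂ →
        ∀ (Ω : Set (EuclideanSpace ℝ (Fin n))) (u : EuclideanSpace ℝ (Fin n) → ℝ),
          IsOpen Ω → IsConnected Ω → Bornology.IsBounded Ω → Metric.diam Ω ≤ d →
          ContDiffOn ℝ (⊤ : ℕ∞) u Ω → ContinuousOn u (closure Ω) →
          (∀ x ∈ closure Ω, |u x| ≤ M) →
          (∀ x ∈ Ω, hessEigen u x ∈ Γ) →
          (∀ x ∈ Ω, f (hessEigen u x) = 1) →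
          (∀ x ∈ frontier Ω, u x = 0) →
          (∀ x ∈ Ω, (-u x) ^ α * ‖gradient u x‖ ≤ K) →
          ∀ x ∈ Ω, (-u x) ^ β * ‖iteratedFDeriv ℝ 2 u x‖ ≤ C := by
  obtain ⟨M', hM'⟩ : ∃ M', M' = max M 1 := ⟨_, rfl⟩
  have hM1 : 1 ≤ M' := by rw [hM']; exact le_max_right _ _
  have hM2 : M ≤ M' := by rw [hM']; exact le_max_left _ _
  have hM0 : 0 < M' := by linarith
  obtain ⟨a, ha⟩ : ∃ a : ℕ, α ≤ a := exists_nat_ge α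
  obtain ⟨k, hk⟩ : ∃ k : ℕ, N₂ ≤ k := exists_nat_ge N₂
  obtain ⟨K', hK'⟩ : ∃ K', K' = M' ^ ((a:ℝ) - α) * K := ⟨_, rfl⟩
  have hK0 : 0 < K' := by
    rw [hK']; exact mul_pos (Real.rpow_pos_of_pos hM0 _) hK
  obtain ⟨m, hm⟩ : ∃ m, m = 4*a+2 := ⟨_, rfl⟩
  obtain ⟨K1, hK1⟩ : ∃ K1, K1 = M'^(2*a+2)*K'^2 := ⟨_, rfl⟩
  obtain ⟨ε, hε⟩ : ∃ ε, ε = 1/(96*K1) := ⟨_, rfl⟩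
  obtain ⟨B, hB⟩ : ∃ B, B = 4*ε*(m:ℝ)^2*K'^4+2 := ⟨_, rfl⟩
  obtain ⟨C3, hC3⟩ : ∃ C3, C3 = 3*ε^2*(m:ℝ)^2*(K'^6*M'^(2*a+2)) + 3*B^2*d^2 := ⟨_, rfl⟩
  obtain ⟨j, hj⟩ : ∃ j : ℕ, 2*C3 ≤ j := exists_nat_ge (2*C3)
  obtain ⟨β, hβ⟩ : ∃ β : ℕ, β = 6 + j + m + (2*a+2) + k + 1 := ⟨_, rfl⟩
  obtain ⟨C4, hC4⟩ : ∃ C4, C4 = 3*(β:ℝ)^2*K'^2 + 2*C3*M'^(2*a+2) := ⟨_, rfl⟩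
  obtain ⟨D, hD⟩ : ∃ D, D = ((β:ℝ) + ε*m*K1)*M' := ⟨_, rfl⟩
  have hβ6 : (6:ℝ) ≤ β := by
    have : 6 ≤ β := by omega
    exact_mod_cast this
  have hβC : 2*C3 ≤ β := by
    have : j ≤ β := by omega
    have : (j:ℝ) ≤ β := by exact_mod_cast this
    linarith
  obtain ⟨C5, hC5⟩ : ∃ C5, C5 = Real.sqrt (M'^(2*β)*((64+48*n)*C4/ε + 8*N₁*D^(k+1)/ε))
    * Real.exp (ε*K1+B/2*d^2) := ⟨_, rfl⟩
  have hC50 : 0 ≤ C5 := by rw [hC5]; positivity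
  refine ⟨β, n * C5 + 1, by linarith, by positivity, ?_⟩
  intro Γ f hΓ hf hN Ω u hΩ _ hbd hdiam hu hc huM hadm hsol hfr hgrad x hx
  have hn0 : 0 < n := by omega
  have huN : ∀ y ∈ Ω, ∀ j : ℕ, ContDiffAt ℝ j u y := fun y hy j =>
    (hu.contDiffAt (hΩ.mem_nhds hy)).of_le (by exact_mod_cast le_top)
  have huA : ∀ y ∈ Ω, ContDiffAt ℝ 2 u y := fun y hy => huN y hy 2
  have hux := weak_max hn0 hΓ hΩ hbd huA hc hadm hfr x hx
  rw [Real.rpow_natCast]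
  rcases hux.lt_or_eq with hneg | hzero
  swap
  · rw [hzero, neg_zero, zero_pow (by omega), zero_mul]
    positivity
  have hupos : 0 < - u x := by linarith
  have huM' : ∀ y ∈ Ω, - u y ≤ M' := fun y hy =>
    ((neg_le_abs _).trans (huM y (subset_closure hy))).trans hM2
  have hgrad' : ∀ y ∈ Ω, 0 < - u y → (- u y)^a * ‖gradient u y‖ ≤ K' := by
    intro y hy hpos
    have e1 : (- u y)^a = (- u y) ^ ((a:ℝ) - α) * (- u y) ^ α := by
      rw [← Real.rpow_add hpos, sub_add_cancel, Real.rpow_natCast]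
    rw [e1, hK', mul_assoc]
    have e2 : (- u y) ^ ((a:ℝ) - α) ≤ M' ^ ((a:ℝ) - α) :=
      Real.rpow_le_rpow hpos.le (huM' y hy) (by linarith)
    exact mul_le_mul e2 (hgrad y hy) (by positivity) (by positivity)
  have hest : ∀ e : EuclideanSpace ℝ (Fin n), ‖e‖ = 1 →
      (- u x)^β * fderiv ℝ (fderiv ℝ u) x e e ≤ C5 := by
    intro e he
    have hev : ∀ᶠ δ in nhdsWithin (0:ℝ) (Set.Ioi 0),
        (- u x - δ)^β * fderiv ℝ (fderiv ℝ u) x e e ≤ C5 := by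
      filter_upwards [Ioo_mem_nhdsGT hupos] with δ hδ
      rw [hC5]
      exact max_est hn0 hΓ hf hN hN₁ hk hΩ hbd hu hc hadm hsol hfr hm hδ.1 hdiam huM' hM1 hK0 hK1
        hε hB hC3 hβ6 hβC hC4 hD (by omega) (by omega) hgrad' hx (by linarith [hδ.2]) he
    have hlim : Filter.Tendsto (fun δ : ℝ => (- u x - δ)^β * fderiv ℝ (fderiv ℝ u) x e e)
        (nhdsWithin (0:ℝ) (Set.Ioi 0)) (nhds ((- u x - 0)^β * fderiv ℝ (fderiv ℝ u) x e e)) := by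
      have hcont : Continuous (fun δ : ℝ => (- u x - δ)^β * fderiv ℝ (fderiv ℝ u) x e e) := by
        fun_prop
      exact (hcont.tendsto 0).mono_left nhdsWithin_le_nhds
    have := le_of_tendsto hlim hev
    rwa [sub_zero] at this
  have hpw : 0 < (- u x)^β := by positivity
  have hnb := norm_bd (huA x hx) (cone_sum_pos hn0 hΓ (hadm x hx)) (Λ := C5 / (- u x)^β)
    (by positivity) (fun e he => by
      rw [le_div_iff₀ hpw, mul_comm]
      exact hest e he)
  calc (- u x)^β * ‖iteratedFDeriv ℝ 2 u x‖ ≤ (- u x)^β * (n * (C5 / (- u x)^β)) := by gcongr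
    _ = n * C5 := by field_simp
    _ ≤ n * C5 + 1 := by linarith
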